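/- arXiv:2101.08648 — 2 statements merged into one kernel-verified Lean document; each statement's English description precedes it below -/
import Mathlib

section
/- Let d be an odd prime and let α ∈ (0, 1/6). Then for every ε ∈ (0, 1) there exist a constant C > 0 and infinitely many positive integers m such that for each such m there is a (d+1)-regular finite simple graph G_m on m vertices satisfying: (1) girth(G_m) ≥ 2α·log_{2d-1}(m); and (2) the adjacency matrix A(G_m) has ⌊α·log_d(m)⌋ distinct eigenvalues λ_1, …, λ_{⌊α log_d(m)⌋}, each admitting a (k, ε)-localized eigenvector for some k ≤ C·m^α. -/
open Classical

set_option linter.unusedSectionVars false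

noncomputable section

namespace Formal

variable {V : Type*} [Fintype V] [DecidableEq V]

/-- The real adjacency matrix of a finite simple graph. -/
def adjMat (G : SimpleGraph V) : Matrix V V ℝ :=
  letI := Classical.decRel G.Adj
  SimpleGraph.adjMatrix ℝ G

lemma adjMat_isHermitian (G : SimpleGraph V) : (adjMat G).IsHermitian := by
  letI := Classical.decRel G.Adj
  unfold adjMat
  rw [Matrix.IsHermitian, Matrix.conjTranspose_eq_transpose_of_trivial]
  exact SimpleGraph.isSymm_adjMatrix G

/-- `G` is `k`-regular: every vertex has exactly `k` neighbours. -/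
def IsRegular (G : SimpleGraph V) (k : ℕ) : Prop :=
  ∀ v : V, (G.neighborSet v).ncard = k

/-- The eigenvalues (with multiplicity) of the adjacency matrix, indexed by vertices. -/
def eigs (G : SimpleGraph V) : V → ℝ :=
  (adjMat_isHermitian G).eigenvalues

/-- The absolute values of the adjacency eigenvalues, sorted in increasing order. -/
def sortedAbsEigs (G : SimpleGraph V) : List ℝ :=
  (Finset.univ.val.map fun i => |eigs G i|).sort (· ≤ ·)

/-- `λ(G)`: the second largest absolute value of an eigenvalue (with multiplicity). -/
def secondLargestAbsEig (G : SimpleGraph V) : ℝ :=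
  (sortedAbsEigs G).getD (Fintype.card V - 2) 0

/-- `λ₃(G)`: the third largest absolute value of an eigenvalue (with multiplicity). -/
def thirdLargestAbsEig (G : SimpleGraph V) : ℝ :=
  (sortedAbsEigs G).getD (Fintype.card V - 3) 0

/-- `μ` has a `(k, ε)`-localized (ℓ²-normalized) eigenvector for `A(G)`. -/
def HasLocalizedEigenvector (G : SimpleGraph V) (μ : ℝ) (k : ℕ) (ε : ℝ) : Prop :=
  ∃ v : V → ℝ, (adjMat G).mulVec v = μ • v ∧ (∑ x, (v x) ^ 2) = 1 ∧
    ∃ S : Finset V, S.card = k ∧ ε ≤ ∑ x ∈ S, (v x) ^ 2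

/-- There are `r` distinct eigenvalues of `A(G)`, each with a `(k, ε)`-localized
eigenvector for some `k ≤ bound`. -/
def LocalizedSpectrum (G : SimpleGraph V) (r : ℕ) (ε bound : ℝ) : Prop :=
  ∃ Λ : Finset ℝ, Λ.card = r ∧
    ∀ μ ∈ Λ, ∃ k : ℕ, (k : ℝ) ≤ bound ∧ HasLocalizedEigenvector G μ k ε

/-- `girth(G) ≥ x` for a real number `x` (`girth = ⊤` counts as `≥ x`). -/
def girthGe {W : Type*} (G : SimpleGraph W) (x : ℝ) : Prop :=
  ∀ g : ℕ, G.girth = g → x ≤ g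

/-- `girth(G) > x` for a real number `x` (`girth = ⊤` counts as `> x`). -/
def girthGt {W : Type*} (G : SimpleGraph W) (x : ℝ) : Prop :=
  ∀ g : ℕ, G.girth = g → x < g

/-- The `j`-th prime, so `nthPrime 1 = 2`, `nthPrime 2 = 3`, ..., `nthPrime 10 = 29`. -/
def nthPrime (j : ℕ) : ℕ :=
  Nat.nth Nat.Prime (j - 1)

/-! ### Graphs without short cycles -/

/-- Every cycle of `G` has length at least `g`: the endpoints of an edge are joined by no
walk of length less than `g - 1` avoiding that edge. -/
def NoShortCycle {U : Type*} (G : SimpleGraph U) (g : ℕ) : Prop :=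
  ∀ x y, G.Adj x y → ∀ p : (G.deleteEdges {s(x, y)}).Walk x y, g ≤ p.length + 1

/-- There is a walk of length at most `r` from `a` to `b`. -/
def Near {U : Type*} (G : SimpleGraph U) (r : ℕ) (a b : U) : Prop :=
  ∃ p : G.Walk a b, p.length ≤ r

section Walks

variable {U : Type*} {G H : SimpleGraph U} {g r : ℕ} {a b u v x y : U}

lemma NoShortCycle.mono (hG : NoShortCycle G g) (h : H ≤ G) : NoShortCycle H g := by
  intro x y hxy p
  have hle : H.deleteEdges {s(x, y)} ≤ G.deleteEdges {s(x, y)} :=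
    SimpleGraph.deleteEdges_mono h
  simpa using hG x y (h hxy) (p.mapLe hle)

lemma noShortCycle_bot : NoShortCycle (⊥ : SimpleGraph U) g := fun _ _ h => h.elim

/-- A walk in `G` with an extra edge either avoids that edge or can be shortened to use it
exactly once. -/
lemma walk_sup_edge (p : (G ⊔ SimpleGraph.edge u v).Walk a b) :
    (∃ q : G.Walk a b, q.length ≤ p.length) ∨
    (∃ (q₁ : G.Walk a u) (q₂ : G.Walk v b), q₁.length + q₂.length + 1 ≤ p.length) ∨
    (∃ (q₁ : G.Walk a v) (q₂ : G.Walk u b), q₁.length + q₂.length + 1 ≤ p.length) := by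
  induction p with
  | nil => exact Or.inl ⟨.nil, by simp⟩
  | @cons a c b h p ih =>
    rw [SimpleGraph.sup_adj, SimpleGraph.edge_adj] at h
    rcases h with h | ⟨⟨rfl, rfl⟩ | ⟨rfl, rfl⟩, -⟩
    · rcases ih with ⟨q, hq⟩ | ⟨q₁, q₂, hq⟩ | ⟨q₁, q₂, hq⟩
      · exact Or.inl ⟨.cons h q, by simpa using hq⟩
      · exact Or.inr (Or.inl ⟨.cons h q₁, q₂, by simp; omega⟩)
      · exact Or.inr (Or.inr ⟨.cons h q₁, q₂, by simp; omega⟩)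
    · rcases ih with ⟨q, hq⟩ | ⟨q₁, q₂, hq⟩ | ⟨q₁, q₂, hq⟩
      · exact Or.inr (Or.inl ⟨.nil, q, by simpa using hq⟩)
      · exact Or.inr (Or.inl ⟨.nil, q₂, by simp; omega⟩)
      · exact Or.inl ⟨q₂, by simp; omega⟩
    · rcases ih with ⟨q, hq⟩ | ⟨q₁, q₂, hq⟩ | ⟨q₁, q₂, hq⟩
      · exact Or.inr (Or.inr ⟨.nil, q, by simpa using hq⟩)
      · exact Or.inl ⟨q₂, by simp; omega⟩
      · exact Or.inr (Or.inr ⟨.nil, q₂, by simp; omega⟩)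

lemma NoShortCycle.sup_edge (hG : NoShortCycle G g)
    (huv : ∀ p : G.Walk u v, g ≤ p.length + 1) :
    NoShortCycle (G ⊔ SimpleGraph.edge u v) g := by
  intro a b hab p
  by_cases he : s(a, b) = s(u, v)
  · have hle : (G ⊔ SimpleGraph.edge u v).deleteEdges {s(a, b)} ≤ G := by
      intro c e hce
      rw [SimpleGraph.deleteEdges_adj, SimpleGraph.sup_adj, SimpleGraph.edge_adj] at hce
      obtain ⟨h | ⟨h, -⟩, hne⟩ := hce
      · exact h
      · exfalso
        apply hne
        rw [he]
        rcases h with ⟨rfl, rfl⟩ | ⟨rfl, rfl⟩ <;> simp [Sym2.eq_swap]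
    rcases Sym2.eq_iff.1 he with ⟨rfl, rfl⟩ | ⟨rfl, rfl⟩
    · simpa using huv (p.mapLe hle)
    · simpa using huv (p.mapLe hle).reverse
  · have hab' : G.Adj a b := by
      rw [SimpleGraph.sup_adj, SimpleGraph.edge_adj] at hab
      rcases hab with h | ⟨h, -⟩
      · exact h
      · exfalso
        apply he
        rcases h with ⟨rfl, rfl⟩ | ⟨rfl, rfl⟩ <;> simp [Sym2.eq_swap]
    have hle : (G ⊔ SimpleGraph.edge u v).deleteEdges {s(a, b)} ≤
        G.deleteEdges {s(a, b)} ⊔ SimpleGraph.edge u v := by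
      intro c e hce
      rw [SimpleGraph.deleteEdges_adj, SimpleGraph.sup_adj] at hce
      rw [SimpleGraph.sup_adj, SimpleGraph.deleteEdges_adj]
      tauto
    have hsub : G.deleteEdges {s(a, b)} ≤ G := SimpleGraph.deleteEdges_le _
    have hlen : (p.mapLe hle).length = p.length := by simp
    rcases walk_sup_edge (p.mapLe hle) with ⟨q, hq⟩ | ⟨q₁, q₂, hq⟩ | ⟨q₁, q₂, hq⟩
    · have := hG a b hab' q
      omega
    · have := huv (((q₁.mapLe hsub).reverse.append (.cons hab' .nil)).append
        (q₂.mapLe hsub).reverse)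
      simp at this
      omega
    · have := huv (((q₂.mapLe hsub).append (.cons hab'.symm .nil)).append (q₁.mapLe hsub))
      simp at this
      omega

/-- Replacing the edge `xy` by the edges `uy` and `xv` creates no short cycle if `x` is far from
`u` and `v`. -/
lemma NoShortCycle.switch (hG : NoShortCycle G g) (hxy : G.Adj x y)
    (hux : ¬ Near G g u x) (hvx : ¬ Near G g v x) :
    NoShortCycle (G.deleteEdges {s(x, y)} ⊔ SimpleGraph.edge u y ⊔ SimpleGraph.edge x v) g := by
  have hsub : G.deleteEdges {s(x, y)} ≤ G := SimpleGraph.deleteEdges_le _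
  have far : ∀ {w : U}, ¬ Near G g w x → ∀ q : (G.deleteEdges {s(x, y)}).Walk w x,
      g < q.length := fun hw q => by
    by_contra hlt
    exact hw ⟨q.mapLe hsub, by simpa using hlt⟩
  refine NoShortCycle.sup_edge (NoShortCycle.sup_edge (hG.mono hsub) ?_) ?_
  · intro p
    by_contra hlt
    refine hux ⟨(p.mapLe hsub).append (.cons hxy.symm .nil), ?_⟩
    simp
    omega
  · intro p
    rcases walk_sup_edge p with ⟨q, hq⟩ | ⟨q₁, q₂, hq⟩ | ⟨q₁, q₂, hq⟩
    · have := far hvx q.reverse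
      simp at this
      omega
    · have := far hux q₁.reverse
      simp at this
      omega
    · have := hG x y hxy q₁
      omega

lemma NoShortCycle.le_girth (hG : NoShortCycle G g) (hac : ¬ G.IsAcyclic) : g ≤ G.girth := by
  obtain ⟨a, w, hw, hlen⟩ := SimpleGraph.exists_girth_eq_length.2 hac
  rw [hlen]
  cases w with
  | nil => exact absurd hw (by simp)
  | @cons _ c _ h p =>
    rw [SimpleGraph.Walk.cons_isCycle_iff] at hw
    have := hG a c h (p.toDeleteEdge _ hw.2).reverse
    simpa using this

end Walks

lemma not_isAcyclic_of_degree {U : Type*} [Fintype U] [Nonempty U] (G : SimpleGraph U) (k : ℕ)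
    (hk : 2 ≤ k) (hG : ∀ v, G.degree v = k) : ¬ G.IsAcyclic := by
  intro hac
  obtain ⟨T, hle, -, hT⟩ :=
    (SimpleGraph.connected_top (V := U)).exists_isTree_le_of_le_of_isAcyclic le_top hac
  have h1 := hT.card_edgeFinset
  have h2 : G.edgeFinset.card ≤ T.edgeFinset.card :=
    Finset.card_le_card (SimpleGraph.edgeFinset_mono hle)
  have h3 := G.sum_degrees_eq_twice_card_edges
  simp only [hG, Finset.sum_const, Finset.card_univ, smul_eq_mul] at h3
  nlinarith

/-! ### Counting the vertices of a ball -/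

section Balls

variable {U : Type*} [Fintype U] {G : SimpleGraph U}

/-- The endpoints of the non-backtracking walks of length at most `r` that start at `w` and
whose first step does not lead to `p`. -/
def nonBacktrackingReach (G : SimpleGraph U) : ℕ → U → U → Finset U
  | 0, _, w => {w}
  | r + 1, p, w => insert w
      ((Finset.univ.filter fun c => G.Adj w c ∧ c ≠ p).biUnion (nonBacktrackingReach G r w))

lemma mem_nonBacktrackingReach {r : ℕ} {p w z : U} (q : G.Walk w z) (hq : q.IsPath)
    (hr : q.length ≤ r) (hp : p ∉ q.support.tail) : z ∈ nonBacktrackingReach G r p w := by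
  induction q generalizing r p with
  | nil => cases r <;> simp [nonBacktrackingReach]
  | @cons w c z h q ih =>
    obtain _ | r := r
    · simp at hr
    · rw [SimpleGraph.Walk.cons_isPath_iff] at hq
      simp only [nonBacktrackingReach, Finset.mem_insert, Finset.mem_biUnion, Finset.mem_filter,
        Finset.mem_univ, true_and]
      refine Or.inr ⟨c, ⟨h, ?_⟩, ih hq.1 (by simpa using hr)
        fun hw => hq.2 (List.mem_of_mem_tail hw)⟩
      rintro rfl
      exact hp (by simp)

lemma card_nonBacktrackingReach_le (φ : U → U → ℝ) (t : ℝ) (ht : 0 ≤ t)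
    (hone : ∀ p w, 1 ≤ φ p w)
    (hφ : ∀ p w, p = w ∨ G.Adj p w →
      ∑ c with G.Adj w c ∧ c ≠ p, φ w c ≤ t * φ p w)
    (r : ℕ) (p w : U) (hpw : p = w ∨ G.Adj p w) :
    ((nonBacktrackingReach G r p w).card : ℝ) ≤ φ p w * ∑ i ∈ Finset.range (r + 1), t ^ i := by
  induction r generalizing p w with
  | zero => simpa [nonBacktrackingReach] using hone p w
  | succ r ih =>
    set σ := ∑ i ∈ Finset.range (r + 1), t ^ i with hσ
    have hσ0 : 0 ≤ σ := Finset.sum_nonneg fun i _ => pow_nonneg ht i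
    have hcard : (nonBacktrackingReach G (r + 1) p w).card ≤
        (∑ c with G.Adj w c ∧ c ≠ p, (nonBacktrackingReach G r w c).card) + 1 :=
      (Finset.card_insert_le _ _).trans (Nat.add_le_add_right Finset.card_biUnion_le 1)
    have hsum : ∑ c with G.Adj w c ∧ c ≠ p, ((nonBacktrackingReach G r w c).card : ℝ) ≤
        (∑ c with G.Adj w c ∧ c ≠ p, φ w c) * σ := by
      rw [Finset.sum_mul]
      exact Finset.sum_le_sum fun c hc => ih w c (Or.inr (Finset.mem_filter.1 hc).2.1)
    calc ((nonBacktrackingReach G (r + 1) p w).card : ℝ)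
        ≤ (∑ c with G.Adj w c ∧ c ≠ p, ((nonBacktrackingReach G r w c).card : ℝ)) + 1 := by
          exact_mod_cast hcard
      _ ≤ (t * φ p w) * σ + φ p w :=
          add_le_add (hsum.trans (mul_le_mul_of_nonneg_right (hφ p w hpw) hσ0)) (hone p w)
      _ = φ p w * ∑ i ∈ Finset.range (r + 1 + 1), t ^ i := by
          rw [Finset.sum_range_succ' (fun i => t ^ i), hσ, Finset.mul_sum, mul_add,
            Finset.mul_sum]
          congr 1
          · exact Finset.sum_congr rfl fun i _ => by ring
          · simp

/-- If the weights `ψ` of directed edges grow by a factor at most `t` in each non-backtracking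
step, then the balls of radius `r` have size `O(t ^ r)`. -/
lemma card_near_le (ψ : U → U → ℝ) (ω t : ℝ) (ht : 0 ≤ t) (hω : 1 ≤ ω)
    (hone : ∀ p w, 1 ≤ ψ p w)
    (hroot : ∀ w, ∑ c with G.Adj w c, ψ w c ≤ t * ω)
    (hstep : ∀ p w, G.Adj w p → ∑ c with G.Adj w c, ψ w c ≤ t * ψ p w + ψ w p)
    (r : ℕ) (u : U) :
    ((Finset.univ.filter fun w => Near G r u w).card : ℝ) ≤
      ω * ∑ i ∈ Finset.range (r + 1), t ^ i := by
  let φ : U → U → ℝ := fun p w => if p = w then ω else ψ p w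
  have hφsum : ∀ p w, ∑ c with G.Adj w c ∧ c ≠ p, φ w c = ∑ c with G.Adj w c ∧ c ≠ p, ψ w c :=
    fun p w => Finset.sum_congr rfl fun c hc => if_neg (Finset.mem_filter.1 hc).2.1.ne
  have hbound : ((nonBacktrackingReach G r u u).card : ℝ) ≤
      φ u u * ∑ i ∈ Finset.range (r + 1), t ^ i := by
    refine card_nonBacktrackingReach_le φ t ht (fun p w => ?_) (fun p w hpw => ?_) r u u
      (Or.inl rfl)
    · simp only [φ]
      split_ifs
      exacts [hω, hone p w]
    · rw [hφsum]
      rcases hpw with rfl | hpw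
      · refine le_trans (Finset.sum_le_sum_of_subset_of_nonneg (fun c hc => ?_)
          fun c _ _ => zero_le_one.trans (hone p c)) ((hroot p).trans_eq (by simp [φ]))
        simp only [Finset.mem_filter, Finset.mem_univ, true_and] at hc ⊢
        exact hc.1
      · have hsplit : ∑ c with G.Adj w c ∧ c ≠ p, ψ w c + ψ w p = ∑ c with G.Adj w c, ψ w c := by
          rw [← Finset.sum_erase_add _ _
            (show p ∈ Finset.univ.filter fun c => G.Adj w c by simpa using hpw.symm)]
          congr 2
          ext c
          simp [and_comm]
        simp only [φ, if_neg hpw.ne]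
        linarith [hstep p w hpw.symm]
  refine le_trans ?_ (hbound.trans_eq (by simp [φ]))
  refine Nat.cast_le.2 (Finset.card_le_card fun w hw => ?_)
  obtain ⟨q, hq⟩ := (Finset.mem_filter.1 hw).2
  have hpath := q.bypass_isPath
  refine mem_nonBacktrackingReach q.bypass hpath (q.length_bypass_le_length.trans hq) ?_
  have hnodup := hpath.support_nodup
  rw [← SimpleGraph.Walk.cons_tail_support] at hnodup
  exact (List.nodup_cons.1 hnodup).1

end Balls

/-! ### Completing a graph between two vertex sets -/

section Completion

variable {U : Type*} [Fintype U]

/-- The pair `w, z` has one vertex in `A` and the other one in `B`. -/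
def Cross (A B : Finset U) (w z : U) : Prop := (w ∈ A ∧ z ∈ B) ∨ (w ∈ B ∧ z ∈ A)

/-- The number of edges of `G` at `w` between `A` and `B`. -/
def crossDegree (G : SimpleGraph U) (A B : Finset U) (w : U) : ℕ :=
  (Finset.univ.filter fun z => G.Adj w z ∧ Cross A B w z).card

/-- `G` has no cycle shorter than `g`, agrees with `F` except between `A` and `B`, and has at
most `c w` edges between `A` and `B` at each vertex `w`. -/
structure PartialCompletion (F : SimpleGraph U) (A B : Finset U) (c : U → ℕ) (g : ℕ)
    (G : SimpleGraph U) : Prop where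
  noShortCycle : NoShortCycle G g
  adj_iff : ∀ w z, ¬ Cross A B w z → (G.Adj w z ↔ F.Adj w z)
  crossDegree_le : ∀ w, crossDegree G A B w ≤ c w

variable {F G : SimpleGraph U} {A B : Finset U} {c : U → ℕ} {g : ℕ} {u v x y : U}

lemma Cross.symm {w z : U} (h : Cross A B w z) : Cross A B z w := by
  unfold Cross at *
  tauto

lemma crossDegree_of_mem_left (hAB : Disjoint A B) {w : U} (hw : w ∈ A) :
    crossDegree G A B w = (B.filter fun z => G.Adj w z).card := by
  have hwB : w ∉ B := Finset.disjoint_left.1 hAB hw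
  unfold crossDegree Cross
  congr 1
  ext z
  simp [hw, hwB, and_comm]

lemma crossDegree_of_mem_right (hAB : Disjoint A B) {w : U} (hw : w ∈ B) :
    crossDegree G A B w = (A.filter fun z => G.Adj w z).card := by
  have hwA : w ∉ A := Finset.disjoint_right.1 hAB hw
  unfold crossDegree Cross
  congr 1
  ext z
  simp [hw, hwA, and_comm]

lemma crossDegree_eq_zero {w : U} (hA : w ∉ A) (hB : w ∉ B) : crossDegree G A B w = 0 := by
  simp [crossDegree, Cross, hA, hB]

lemma sum_crossDegree_left_eq_right (hAB : Disjoint A B) :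
    ∑ w ∈ A, crossDegree G A B w = ∑ w ∈ B, crossDegree G A B w := by
  rw [Finset.sum_congr rfl fun w hw => crossDegree_of_mem_left (G := G) hAB hw,
    Finset.sum_congr rfl fun w hw => crossDegree_of_mem_right (G := G) hAB hw]
  have := Finset.sum_card_bipartiteAbove_eq_sum_card_bipartiteBelow (s := A) (t := B) G.Adj
  simp only [Finset.bipartiteAbove, Finset.bipartiteBelow] at this
  rw [this]
  simp only [G.adj_comm]

lemma crossDegree_sup_edge (huv : Cross A B u v) (hne : u ≠ v) (hnadj : ¬ G.Adj u v) (w : U) :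
    crossDegree (G ⊔ SimpleGraph.edge u v) A B w =
      crossDegree G A B w + if w = u ∨ w = v then 1 else 0 := by
  have key : ∀ a b : U, Cross A B a b → a ≠ b → ¬ G.Adj a b →
      crossDegree (G ⊔ SimpleGraph.edge a b) A B a = crossDegree G A B a + 1 := by
    intro a b hab hne hnadj
    unfold crossDegree
    rw [← Finset.card_insert_of_notMem (a := b) (by simp [hnadj])]
    congr 1
    ext z
    simp only [SimpleGraph.sup_adj, SimpleGraph.edge_adj, Finset.mem_filter, Finset.mem_univ,
      true_and, Finset.mem_insert]
    constructor
    · rintro ⟨h | ⟨⟨-, rfl⟩ | ⟨rfl, rfl⟩, -⟩, hc⟩ <;> tauto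
    · rintro (rfl | h) <;> tauto
  by_cases hwu : w = u
  · subst hwu
    simp [key w v huv hne hnadj]
  by_cases hwv : w = v
  · subst hwv
    rw [SimpleGraph.edge_comm, key w u huv.symm hne.symm fun h => hnadj h.symm]
    simp
  · unfold crossDegree
    simp [hwu, hwv, SimpleGraph.edge_adj]

lemma crossDegree_deleteEdges (hxy : Cross A B x y) (hadj : G.Adj x y) (w : U) :
    crossDegree (G.deleteEdges {s(x, y)}) A B w + (if w = x ∨ w = y then 1 else 0) =
      crossDegree G A B w := by
  have hsup : G.deleteEdges {s(x, y)} ⊔ SimpleGraph.edge x y = G := by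
    ext a b
    simp only [SimpleGraph.sup_adj, SimpleGraph.edge_adj, SimpleGraph.deleteEdges_adj,
      Set.mem_singleton_iff, Sym2.eq_iff]
    constructor
    · rintro (h | ⟨⟨rfl, rfl⟩ | ⟨rfl, rfl⟩, -⟩)
      exacts [h.1, hadj, hadj.symm]
    · intro h
      have := h.ne
      tauto
  rw [← crossDegree_sup_edge hxy hadj.ne (by simp), hsup]

/-- A partial completion that misses an edge at `u ∈ A` and at `v ∈ B` can be enlarged, by adding
an edge or by switching, provided that some vertex of `A` is far from both. -/
lemma PartialCompletion.exists_enlarge (hG : PartialCompletion F A B c g G)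
    (hg : 2 ≤ g) (hAB : Disjoint A B) (hu : u ∈ A) (hv : v ∈ B)
    (hcu : crossDegree G A B u < c u) (hcv : crossDegree G A B v < c v)
    (hx : x ∈ A) (hcx : 0 < c x) (hux : ¬ Near G g u x) (hvx : ¬ Near G g v x) :
    ∃ G', PartialCompletion F A B c g G' ∧
      ∑ w, crossDegree G A B w < ∑ w, crossDegree G' A B w := by
  have hxv : Cross A B x v := Or.inl ⟨hx, hv⟩
  have hxv_ne : x ≠ v := fun h => Finset.disjoint_left.1 hAB hx (h ▸ hv)
  have hux_ne : u ≠ x := fun h => hux (h ▸ ⟨.nil, by simp⟩)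
  have hnadj : ¬ G.Adj x v := fun h => hvx ⟨.cons h.symm .nil, by simp; omega⟩
  by_cases hlt : crossDegree G A B x < c x
  · have hdeg := crossDegree_sup_edge hxv hxv_ne hnadj
    refine ⟨G ⊔ SimpleGraph.edge x v, ⟨?_, ?_, ?_⟩, ?_⟩
    · refine hG.noShortCycle.sup_edge fun p => ?_
      by_contra hp
      exact hvx ⟨p.reverse, by simp; omega⟩
    · intro w z hwz
      rw [← hG.adj_iff w z hwz, SimpleGraph.sup_adj, SimpleGraph.edge_adj]
      refine or_iff_left ?_
      rintro ⟨⟨rfl, rfl⟩ | ⟨rfl, rfl⟩, -⟩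
      exacts [hwz hxv, hwz hxv.symm]
    · intro w
      rw [hdeg]
      have := hG.crossDegree_le w
      split_ifs with h
      · rcases h with rfl | rfl <;> omega
      · omega
    · refine Finset.sum_lt_sum (fun w _ => by rw [hdeg]; omega) ⟨x, Finset.mem_univ _, ?_⟩
      rw [hdeg]
      simp
  · obtain ⟨y, hy⟩ : ∃ y, y ∈ Finset.univ.filter fun z => G.Adj x z ∧ Cross A B x z := by
      apply Finset.card_pos.1
      change 0 < crossDegree G A B x
      omega
    obtain ⟨hxy, hcross⟩ := (Finset.mem_filter.1 hy).2
    have hyB : y ∈ B := by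
      rcases hcross with h | h
      · exact h.2
      · exact absurd h.1 (Finset.disjoint_left.1 hAB hx)
    have huy : Cross A B u y := Or.inl ⟨hu, hyB⟩
    have huy_ne : u ≠ y := fun h => Finset.disjoint_left.1 hAB hu (h ▸ hyB)
    have huv_ne : u ≠ v := fun h => Finset.disjoint_left.1 hAB hu (h ▸ hv)
    have hyv_ne : y ≠ v := fun h => hnadj (h ▸ hxy)
    have hnadj_uy : ¬ G.Adj u y := fun h =>
      hux ⟨.cons h (.cons hxy.symm .nil), by simpa using hg⟩
    have hdeg : ∀ w, crossDegree
        (G.deleteEdges {s(x, y)} ⊔ SimpleGraph.edge u y ⊔ SimpleGraph.edge x v) A B w =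
          crossDegree G A B w + if w = u ∨ w = v then 1 else 0 := by
      intro w
      rw [crossDegree_sup_edge hxv hxv_ne (by
          simp only [SimpleGraph.sup_adj, SimpleGraph.edge_adj, SimpleGraph.deleteEdges_adj]
          have := hxy.ne
          tauto),
        crossDegree_sup_edge huy huy_ne (by simp [hnadj_uy]),
        ← crossDegree_deleteEdges hcross hxy w]
      have := hxy.ne
      grind
    refine ⟨_, ⟨hG.noShortCycle.switch hxy hux hvx, ?_, ?_⟩, ?_⟩
    · intro w z hwz
      rw [← hG.adj_iff w z hwz, SimpleGraph.sup_adj, SimpleGraph.sup_adj, SimpleGraph.edge_adj,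
        SimpleGraph.edge_adj, SimpleGraph.deleteEdges_adj, Set.mem_singleton_iff, Sym2.eq_iff]
      constructor
      · rintro ((h | ⟨⟨rfl, rfl⟩ | ⟨rfl, rfl⟩, -⟩) | ⟨⟨rfl, rfl⟩ | ⟨rfl, rfl⟩, -⟩)
        exacts [h.1, absurd huy hwz, absurd huy.symm hwz, absurd hxv hwz, absurd hxv.symm hwz]
      · intro h
        refine Or.inl (Or.inl ⟨h, ?_⟩)
        rintro (⟨rfl, rfl⟩ | ⟨rfl, rfl⟩)
        exacts [hwz hcross, hwz hcross.symm]
    · intro w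
      rw [hdeg]
      have := hG.crossDegree_le w
      split_ifs with h
      · rcases h with rfl | rfl <;> omega
      · omega
    · refine Finset.sum_lt_sum (fun w _ => by rw [hdeg]; omega) ⟨u, Finset.mem_univ _, ?_⟩
      rw [hdeg]
      simp

/-- If all balls of radius `g` are small compared with `A`, then a graph can be completed between
`A` and `B` so as to attain prescribed degrees, without creating cycles shorter than `g`. -/
lemma exists_completion (hg : 2 ≤ g) (hAB : Disjoint A B)
    (hF : PartialCompletion F A B c g F)
    (hsum : ∑ w ∈ A, c w = ∑ w ∈ B, c w) (N : ℕ)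
    (hball : ∀ G, PartialCompletion F A B c g G → ∀ u,
      (Finset.univ.filter fun w => Near G g u w).card ≤ N)
    (hN : 2 * N < (A.filter fun w => 0 < c w).card) :
    ∃ G, PartialCompletion F A B c g G ∧ ∀ w, w ∈ A ∨ w ∈ B → crossDegree G A B w = c w := by
  obtain ⟨G, hG, hmax⟩ := Set.exists_max_image {G | PartialCompletion F A B c g G}
    (fun G => ∑ w, crossDegree G A B w) (Set.toFinite _) ⟨F, hF⟩
  refine ⟨G, hG, ?_⟩
  by_contra! hne
  have hdeficient : (∃ u ∈ A, crossDegree G A B u < c u) ∧ ∃ v ∈ B, crossDegree G A B v < c v := by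
    have hle := hG.crossDegree_le
    have hcount := sum_crossDegree_left_eq_right (G := G) hAB
    obtain ⟨w, hw, hwne⟩ := hne
    have hwlt := lt_of_le_of_ne (hle w) hwne
    rcases hw with hw | hw
    · refine ⟨⟨w, hw, hwlt⟩, Finset.exists_lt_of_sum_lt ?_⟩
      rw [← hcount, ← hsum]
      exact Finset.sum_lt_sum (fun i _ => hle i) ⟨w, hw, hwlt⟩
    · refine ⟨Finset.exists_lt_of_sum_lt ?_, ⟨w, hw, hwlt⟩⟩
      rw [hcount, hsum]
      exact Finset.sum_lt_sum (fun i _ => hle i) ⟨w, hw, hwlt⟩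
  obtain ⟨⟨u, hu, hcu⟩, v, hv, hcv⟩ := hdeficient
  obtain ⟨x, hx, hxfar⟩ := Finset.exists_mem_notMem_of_card_lt_card
    (s := (Finset.univ.filter fun w => Near G g u w) ∪ Finset.univ.filter fun w => Near G g v w)
    (t := A.filter fun w => 0 < c w) <| by
      refine (Finset.card_union_le _ _).trans_lt (lt_of_le_of_lt ?_ hN)
      have h₁ := hball G hG u
      have h₂ := hball G hG v
      omega
  simp only [Finset.mem_union, Finset.mem_filter, Finset.mem_univ, true_and, not_or] at hx hxfar
  obtain ⟨G', hG', hlt⟩ :=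
    hG.exists_enlarge hg hAB hu hv hcu hcv hx.1 hx.2 hxfar.1 hxfar.2
  exact absurd (hmax G' hG') (not_le.2 hlt)

end Completion

/-! ### Graphs with a prescribed degree matrix -/

section Typed

variable {U T : Type*} [Fintype U]

/-- The number of neighbours of `v` of type `b`. -/
def typeDegree (G : SimpleGraph U) (τ : U → T) (v : U) (b : T) : ℕ :=
  (Finset.univ.filter fun w => G.Adj v w ∧ τ w = b).card

/-- The set of vertices of type `a`. -/
def typeClass (τ : U → T) (a : T) : Finset U := Finset.univ.filter fun v => τ v = a

lemma sum_adj_eq_sum_typeDegree [Fintype T] (G : SimpleGraph U) (τ : U → T) (v : U) (h : T → ℝ) :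
    ∑ w with G.Adj v w, h (τ w) = ∑ b, (typeDegree G τ v b : ℝ) * h b := by
  rw [← Finset.sum_fiberwise (Finset.univ.filter fun w => G.Adj v w) τ]
  refine Finset.sum_congr rfl fun b _ => ?_
  rw [Finset.filter_filter, Finset.sum_congr rfl (g := fun _ => h b)
    fun w hw => by rw [(Finset.mem_filter.1 hw).2.2]]
  simp [typeDegree]

lemma typeDegree_pos {G : SimpleGraph U} (τ : U → T) {v w : U} (h : G.Adj v w) :
    0 < typeDegree G τ v (τ w) :=
  Finset.card_pos.2 ⟨w, Finset.mem_filter.2 ⟨Finset.mem_univ _, h, rfl⟩⟩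

/-- If all balls of radius `g` are small compared with the type classes, then every balanced degree
matrix with zero diagonal is realized by a graph without cycles shorter than `g`. -/
lemma exists_graph_of_degreeMatrix [Fintype T] (τ : U → T) (D : T → T → ℕ) {g : ℕ} (hg : 2 ≤ g)
    (hdiag : ∀ a, D a a = 0)
    (hbal : ∀ a b, (typeClass τ a).card * D a b = (typeClass τ b).card * D b a) (N : ℕ)
    (hball : ∀ G : SimpleGraph U, NoShortCycle G g → (∀ v b, typeDegree G τ v b ≤ D (τ v) b) →
      ∀ u, (Finset.univ.filter fun w => Near G g u w).card ≤ N)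
    (hN : ∀ a b, 0 < D a b → 2 * N < (typeClass τ a).card) :
    ∃ G : SimpleGraph U, NoShortCycle G g ∧ ∀ v b, typeDegree G τ v b = D (τ v) b := by
  suffices H : ∀ P : Finset (T × T), ∃ G : SimpleGraph U, NoShortCycle G g ∧
      (∀ v b, typeDegree G τ v b ≤ D (τ v) b) ∧
      ∀ v b, (τ v, b) ∈ P → typeDegree G τ v b = D (τ v) b by
    obtain ⟨G, hG, -, h⟩ := H Finset.univ
    exact ⟨G, hG, fun v b => h v b (Finset.mem_univ _)⟩
  intro P
  induction P using Finset.induction_on with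
  | empty =>
    exact ⟨⊥, noShortCycle_bot, fun v b => by simp [typeDegree], fun v b h => by simp at h⟩
  | insert q P _ ih =>
    obtain ⟨F, hF, hle, hP⟩ := ih
    obtain ⟨a, b⟩ := q
    rcases Nat.eq_zero_or_pos (D a b) with h0 | hpos
    · refine ⟨F, hF, hle, fun v b' h => ?_⟩
      rcases Finset.mem_insert.1 h with h | h
      · have := hle v b'
        obtain ⟨rfl, rfl⟩ := Prod.ext_iff.1 h
        simp only at *
        omega
      · exact hP v b' h
    have hab : a ≠ b := by
      rintro rfl
      simp [hdiag] at hpos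
    set A := typeClass τ a with hA
    set B := typeClass τ b with hB
    have memA : ∀ v, v ∈ A ↔ τ v = a := fun v => by simp [hA, typeClass]
    have memB : ∀ v, v ∈ B ↔ τ v = b := fun v => by simp [hB, typeClass]
    have hAB : Disjoint A B :=
      Finset.disjoint_left.2 fun v h h' => hab (((memA v).1 h).symm.trans ((memB v).1 h'))
    let c : U → ℕ := fun v => if τ v = a then D a b else if τ v = b then D b a else 0
    have cA : ∀ v, τ v = a → c v = D a b := fun v h => by simp [c, h]
    have cB : ∀ v, τ v = b → c v = D b a := fun v h => by simp [c, h, hab.symm]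
    have degA : ∀ (G : SimpleGraph U) v, τ v = a → crossDegree G A B v = typeDegree G τ v b := by
      intro G v h
      rw [crossDegree_of_mem_left hAB ((memA v).2 h), typeDegree]
      congr 1
      ext w
      simp [memB, and_comm]
    have degB : ∀ (G : SimpleGraph U) v, τ v = b → crossDegree G A B v = typeDegree G τ v a := by
      intro G v h
      rw [crossDegree_of_mem_right hAB ((memB v).2 h), typeDegree]
      congr 1
      ext w
      simp [memA, and_comm]
    have degOther : ∀ G, PartialCompletion F A B c g G → ∀ v b',
        ¬ (τ v = a ∧ b' = b) → ¬ (τ v = b ∧ b' = a) →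
        typeDegree G τ v b' = typeDegree F τ v b' := by
      intro G hG v b' h₁ h₂
      unfold typeDegree
      congr 1
      ext w
      simp only [Finset.mem_filter, Finset.mem_univ, true_and]
      refine and_congr_left fun hw => hG.adj_iff v w ?_
      rintro (⟨h, h'⟩ | ⟨h, h'⟩)
      · exact h₁ ⟨(memA v).1 h, hw.symm.trans ((memB w).1 h')⟩
      · exact h₂ ⟨(memB v).1 h, hw.symm.trans ((memA w).1 h')⟩
    have caps : ∀ G, PartialCompletion F A B c g G → ∀ v b', typeDegree G τ v b' ≤ D (τ v) b' := by
      intro G hG v b'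
      by_cases h₁ : τ v = a ∧ b' = b
      · obtain ⟨h, rfl⟩ := h₁
        rw [← degA G v h, h, ← cA v h]
        exact hG.crossDegree_le v
      by_cases h₂ : τ v = b ∧ b' = a
      · obtain ⟨h, rfl⟩ := h₂
        rw [← degB G v h, h, ← cB v h]
        exact hG.crossDegree_le v
      rw [degOther G hG v b' h₁ h₂]
      exact hle v b'
    have hFF : PartialCompletion F A B c g F := by
      refine ⟨hF, fun _ _ _ => Iff.rfl, fun w => ?_⟩
      by_cases h₁ : τ w = a
      · rw [degA F w h₁, cA w h₁, ← h₁]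
        exact hle w b
      by_cases h₂ : τ w = b
      · rw [degB F w h₂, cB w h₂, ← h₂]
        exact hle w a
      rw [crossDegree_eq_zero (by rwa [memA]) (by rwa [memB])]
      exact Nat.zero_le _
    obtain ⟨G, hG, hdeg⟩ := exists_completion hg hAB hFF
      (by
        rw [Finset.sum_congr rfl fun v hv => cA v ((memA v).1 hv),
          Finset.sum_congr rfl fun v hv => cB v ((memB v).1 hv)]
        simpa using hbal a b) N
      (fun G hG => hball G hG.noShortCycle (caps G hG))
      (by
        rw [Finset.filter_true_of_mem fun v hv => by rwa [cA v ((memA v).1 hv)]]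
        exact hN a b hpos)
    refine ⟨G, hG.noShortCycle, caps G hG, fun v b' hvb => ?_⟩
    by_cases h₁ : τ v = a ∧ b' = b
    · obtain ⟨h, rfl⟩ := h₁
      rw [← degA G v h, h, ← cA v h]
      exact hdeg v (Or.inl ((memA v).2 h))
    by_cases h₂ : τ v = b ∧ b' = a
    · obtain ⟨h, rfl⟩ := h₂
      rw [← degB G v h, h, ← cB v h]
      exact hdeg v (Or.inr ((memB v).2 h))
    rw [degOther G hG v b' h₁ h₂]
    refine hP v b' ((Finset.mem_insert.1 hvb).resolve_left fun h => h₁ ?_)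
    exact Prod.ext_iff.1 h

end Typed

/-! ### The regular graph with a localized equitable partition -/

section Construction

/-- The vertices: the support of the eigenvectors (a position on a cycle and a sign, with `2 * M`
vertices each), the boundary of the support (`2 * M * e` vertices for each position), and `2 * K`
further vertices. -/
abbrev Vertex (n e M K : ℕ) : Type :=
  (ZMod n × Bool × Bool × Fin M) ⊕ (ZMod n × Bool × Fin M × Fin e) ⊕ (Bool × Fin K)

/-- Types of vertices: support vertices by position and sign, boundary vertices by position. -/
abbrev VertexType (n : ℕ) : Type := (ZMod n × Bool) ⊕ Option (ZMod n)

variable {n e M K : ℕ}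

/-- The type of a vertex. -/
def vertexType : Vertex n e M K → VertexType n
  | .inl (j, s, _) => .inl (j, s)
  | .inr (.inl (j, _)) => .inr (some j)
  | .inr (.inr _) => .inr none

/-- The degree matrix of the support and its boundary. -/
def supportDegree (n e : ℕ) : VertexType n → VertexType n → ℕ
  | .inl (j, s), .inl (j', s') => if s' = s ∧ (j' = j + 1 ∨ j' = j - 1) then 1 else 0
  | .inl (j, _), .inr (some j') => if j' = j then e else 0
  | .inr (some j), .inl (j', _) => if j' = j then 1 else 0
  | _, _ => 0

/-- The capacity of a vertex for edges outside the support. -/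
def outerDegree : Vertex n e M K → ℕ
  | .inl _ => 0
  | .inr (.inl _) => e
  | .inr (.inr _) => e + 2

/-- The two sides between which the edges outside the support are placed. -/
def outerSide [NeZero n] (i : Bool) : Finset (Vertex n e M K) :=
  Finset.univ.filter fun
    | .inl _ => False
    | .inr (.inl (_, k, _)) => k = i
    | .inr (.inr (k, _)) => k = i

variable [NeZero n]

lemma ZMod.add_one_ne_sub_one (hn : 3 ≤ n) (j : ZMod n) : j + 1 ≠ j - 1 := by
  intro h
  have h2 : ((2 : ℕ) : ZMod n) = 0 := by
    push_cast
    linear_combination h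
  rw [ZMod.natCast_eq_zero_iff] at h2
  exact absurd (Nat.le_of_dvd (by norm_num) h2) (by omega)

lemma sum_supportDegree_support (hn : 3 ≤ n) (j : ZMod n) (s : Bool) (h : ZMod n × Bool → ℝ) :
    ∑ a, (supportDegree n e (.inl (j, s)) (.inl a) : ℝ) * h a = h (j + 1, s) + h (j - 1, s) := by
  have hne := ZMod.add_one_ne_sub_one hn j
  rw [← Finset.sum_pair (f := h) (a := (j + 1, s)) (b := (j - 1, s)) (by simpa using hne),
    ← Finset.sum_subset (Finset.subset_univ {(j + 1, s), (j - 1, s)})]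
  · refine Finset.sum_congr rfl fun a ha => ?_
    simp only [Finset.mem_insert, Finset.mem_singleton] at ha
    rcases ha with rfl | rfl <;> simp [supportDegree]
  · rintro ⟨j', s'⟩ - ha
    simp only [Finset.mem_insert, Finset.mem_singleton, Prod.mk.injEq, not_or] at ha
    rw [supportDegree, if_neg (by tauto)]
    simp

lemma sum_supportDegree_boundary (j : ZMod n) (h : ZMod n × Bool → ℝ) :
    ∑ a, (supportDegree n e (.inr (some j)) (.inl a) : ℝ) * h a = h (j, true) + h (j, false) := by
  simp [supportDegree, Fintype.sum_prod_type, Finset.sum_add_distrib]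

lemma sum_supportDegree (hn : 3 ≤ n) (a : VertexType n) (h : VertexType n → ℝ) :
    ∑ b, (supportDegree n e a b : ℝ) * h b =
      match a with
      | .inl (j, s) => h (.inl (j + 1, s)) + h (.inl (j - 1, s)) + e * h (.inr (some j))
      | .inr (some j) => h (.inl (j, true)) + h (.inl (j, false))
      | .inr none => 0 := by
  rw [Fintype.sum_sum_type]
  rcases a with ⟨j, s⟩ | j | _
  · rw [sum_supportDegree_support hn j s fun a => h (.inl a)]
    simp [supportDegree]
  · simp [supportDegree]
  · rw [sum_supportDegree_boundary _ fun a => h (.inl a)]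
    simp [supportDegree]

lemma card_typeClass_support (a : ZMod n × Bool) :
    (typeClass (vertexType (n := n) (e := e) (M := M) (K := K)) (.inl a)).card = 2 * M := by
  obtain ⟨j, s⟩ := a
  have : typeClass (vertexType (n := n) (e := e) (M := M) (K := K)) (.inl (j, s)) =
      Finset.univ.image fun x : Bool × Fin M => .inl (j, s, x) := by
    ext v
    rcases v with ⟨j', s', x⟩ | ⟨j', x⟩ | x <;>
      simp [typeClass, vertexType, eq_comm]
  rw [this, Finset.card_image_of_injective _ fun x y h => by simpa using h]
  simp

lemma card_typeClass_boundary (j : ZMod n) :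
    (typeClass (vertexType (n := n) (e := e) (M := M) (K := K)) (.inr (some j))).card =
      2 * M * e := by
  have : typeClass (vertexType (n := n) (e := e) (M := M) (K := K)) (.inr (some j)) =
      Finset.univ.image fun x : Bool × Fin M × Fin e => .inr (.inl (j, x)) := by
    ext v
    rcases v with ⟨j', s', x⟩ | ⟨j', x⟩ | x <;>
      simp [typeClass, vertexType, eq_comm]
  rw [this, Finset.card_image_of_injective _ fun x y h => by simpa using h]
  simp [mul_assoc]

/-- Weights of directed edges between support and boundary vertices: `α` inside the support, `t`
from the boundary to the support, and `1` from the support to the boundary. -/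
def edgeWeight (α t : ℝ) : VertexType n → VertexType n → ℝ
  | .inl _, .inl _ => α
  | .inr _, .inl _ => t
  | _, .inr _ => 1

/-- Balls in the support and its boundary grow by a factor of `t` at each step. -/
lemma card_near_le_of_supportDegree (hn : 3 ≤ n) {α t : ℝ} (hα : 1 ≤ α) (ht : 1 ≤ t)
    (h₁ : α + e ≤ t * α) (h₂ : 2 * α + e ≤ t ^ 2 + 1) {G : SimpleGraph (Vertex n e M K)}
    (hG : ∀ v b, typeDegree G vertexType v b ≤ supportDegree n e (vertexType v) b) (r : ℕ)
    (u : Vertex n e M K) :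
    ((Finset.univ.filter fun w => Near G r u w).card : ℝ) ≤
      (α + t) * ∑ i ∈ Finset.range (r + 1), t ^ i := by
  have hweight : ∀ a b : VertexType n, 1 ≤ edgeWeight α t a b := by
    rintro (a | a) (b | b) <;> simp [edgeWeight, hα, ht]
  have hsum : ∀ w, ∑ c with G.Adj w c, edgeWeight α t (vertexType w) (vertexType c) ≤
      ∑ b, (supportDegree n e (vertexType w) b : ℝ) * edgeWeight α t (vertexType w) b := by
    intro w
    rw [sum_adj_eq_sum_typeDegree G vertexType w fun b => edgeWeight α t (vertexType w) b]
    refine Finset.sum_le_sum fun b _ => mul_le_mul_of_nonneg_right (Nat.cast_le.2 (hG w b)) ?_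
    linarith [hweight (vertexType w) b]
  refine card_near_le (fun p w => edgeWeight α t (vertexType p) (vertexType w)) (α + t) t
    (by linarith) (by linarith) (fun p w => hweight _ _) (fun w => (hsum w).trans ?_)
    (fun p w hpw => (hsum w).trans ?_) r u
  · rw [sum_supportDegree hn]
    rcases vertexType w with ⟨j, s⟩ | _ | j
    · simp only [edgeWeight]
      nlinarith
    · simp only
      positivity
    · simp only [edgeWeight]
      nlinarith
  · have hpos : 0 < supportDegree n e (vertexType w) (vertexType p) :=
      (typeDegree_pos vertexType hpw).trans_le (hG w _)
    rw [sum_supportDegree hn]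
    revert hpos
    rcases vertexType w with ⟨j, s⟩ | _ | j <;>
      rcases vertexType p with ⟨j', s'⟩ | _ | j' <;> intro hpos
    all_goals first
      | exact absurd hpos (lt_irrefl 0)
      | (simp only [edgeWeight]; nlinarith)

lemma supportDegree_self (hn : 3 ≤ n) (a : VertexType n) : supportDegree n e a a = 0 := by
  have : Fact (1 < n) := ⟨by omega⟩
  rcases a with ⟨j, s⟩ | _ | j
  · simp [supportDegree, eq_comm (a := j)]
  · rfl
  · rfl

lemma supportDegree_balanced (a b : VertexType n) :
    (typeClass (vertexType (n := n) (e := e) (M := M) (K := K)) a).card * supportDegree n e a b =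
      (typeClass (vertexType (n := n) (e := e) (M := M) (K := K)) b).card *
        supportDegree n e b a := by
  rcases a with ⟨j, s⟩ | _ | j <;> rcases b with ⟨j', s'⟩ | _ | j'
  · rw [card_typeClass_support, card_typeClass_support]
    congr 1
    have h : (s' = s ∧ (j' = j + 1 ∨ j' = j - 1)) ↔ (s = s' ∧ (j = j' + 1 ∨ j = j' - 1)) := by
      rw [eq_comm (a := s), eq_sub_iff_add_eq, eq_sub_iff_add_eq, eq_comm (b := j),
        eq_comm (b := j')]
      tauto
    simp only [supportDegree, h]
  · simp [supportDegree]
  · rw [card_typeClass_support, card_typeClass_boundary]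
    simp only [supportDegree, eq_comm (a := j)]
    split_ifs <;> simp
  · simp [supportDegree]
  · simp [supportDegree]
  · simp [supportDegree]
  · rw [card_typeClass_support, card_typeClass_boundary]
    simp only [supportDegree, eq_comm (a := j)]
    split_ifs <;> simp
  · simp [supportDegree]
  · simp [supportDegree]

/-- A graph on the support and its boundary realizing the degree matrix `supportDegree`. -/
lemma exists_support_graph (hn : 3 ≤ n) (he : 1 ≤ e) {g : ℕ} (hg : 2 ≤ g) {α t : ℝ} (hα : 1 ≤ α)
    (ht : 1 ≤ t) (h₁ : α + e ≤ t * α) (h₂ : 2 * α + e ≤ t ^ 2 + 1)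
    (hM : (α + t) * ∑ i ∈ Finset.range (g + 1), t ^ i < M) :
    ∃ G : SimpleGraph (Vertex n e M K), NoShortCycle G g ∧
      ∀ v b, typeDegree G vertexType v b = supportDegree n e (vertexType v) b := by
  have hpos : 0 ≤ (α + t) * ∑ i ∈ Finset.range (g + 1), t ^ i := by positivity
  have hlt : ⌊(α + t) * ∑ i ∈ Finset.range (g + 1), t ^ i⌋₊ < M := (Nat.floor_lt hpos).2 hM
  refine exists_graph_of_degreeMatrix vertexType (supportDegree n e) hg (supportDegree_self hn)
    supportDegree_balanced ⌊(α + t) * ∑ i ∈ Finset.range (g + 1), t ^ i⌋₊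
    (fun G _ hG u => Nat.le_floor (card_near_le_of_supportDegree hn hα ht h₁ h₂ hG g u)) ?_
  rintro (a | _ | j) b hab
  · rw [card_typeClass_support]
    omega
  · exact absurd hab (by simp [supportDegree])
  · rw [card_typeClass_boundary]
    nlinarith

lemma mem_outerSide_iff {i : Bool} {v : Vertex n e M K} :
    v ∈ outerSide i ↔ match v with
      | .inl _ => False
      | .inr (.inl (_, k, _)) => k = i
      | .inr (.inr (k, _)) => k = i := by
  rw [outerSide, Finset.mem_filter]
  exact and_iff_right (Finset.mem_univ v)

lemma disjoint_outerSide :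
    Disjoint (outerSide true : Finset (Vertex n e M K)) (outerSide false) := by
  rw [Finset.disjoint_left]
  rintro (v | ⟨j, k, v⟩ | ⟨k, v⟩) h h'
  · exact mem_outerSide_iff.1 h
  · exact Bool.noConfusion ((mem_outerSide_iff.1 h).symm.trans (mem_outerSide_iff.1 h'))
  · exact Bool.noConfusion ((mem_outerSide_iff.1 h).symm.trans (mem_outerSide_iff.1 h'))

lemma sum_outerDegree_outerSide :
    ∑ v ∈ (outerSide true : Finset (Vertex n e M K)), outerDegree v =
      ∑ v ∈ (outerSide false : Finset (Vertex n e M K)), outerDegree v := by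
  refine Finset.sum_equiv (.sumCongr (.refl _) (.sumCongr
    (.prodCongr (.refl _) (.prodCongr Equiv.boolNot (.refl _)))
    (.prodCongr Equiv.boolNot (.refl _)))) ?_ ?_
  · rintro (v | ⟨j, k, v⟩ | ⟨k, v⟩) <;> simp [mem_outerSide_iff]
  · rintro (v | ⟨j, k, v⟩ | ⟨k, v⟩) - <;> rfl

lemma not_cross_outerSide_of_support {v w : Vertex n e M K} {a : ZMod n × Bool}
    (h : vertexType w = .inl a) :
    ¬ Cross (outerSide true) (outerSide false) v w := by
  rcases w with w | w | w
  · rintro (⟨-, h⟩ | ⟨-, h⟩) <;> exact mem_outerSide_iff.1 h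
  · exact absurd h (by simp [vertexType])
  · exact absurd h (by simp [vertexType])

/-- For large `M` and `K` there is a regular graph without cycles shorter than `g` in which the
support vertices form an equitable partition described by `supportDegree`. -/
lemma exists_regular_graph (hn : 3 ≤ n) (he : 1 ≤ e) {g : ℕ} (hg : 2 ≤ g) {α t : ℝ} (hα : 1 ≤ α)
    (ht : 1 ≤ t) (h₁ : α + e ≤ t * α) (h₂ : 2 * α + e ≤ t ^ 2 + 1)
    (hM : (α + t) * ∑ i ∈ Finset.range (g + 1), t ^ i < M)
    (hK : 4 * ∑ i ∈ Finset.range (g + 1), (e + 1) ^ i < K) :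
    ∃ G : SimpleGraph (Vertex n e M K), NoShortCycle G g ∧
      (∀ v, (Finset.univ.filter fun w => G.Adj v w).card = e + 2) ∧
      ∀ v a, typeDegree G vertexType v (.inl a) = supportDegree n e (vertexType v) (.inl a) := by
  obtain ⟨F, hF, htype⟩ := exists_support_graph (K := K) hn he hg hα ht h₁ h₂ hM
  have hFcross : ∀ v w, F.Adj v w → ¬ Cross (outerSide true) (outerSide false) v w := by
    intro v w hvw hc
    have hpos := typeDegree_pos vertexType hvw
    rw [htype] at hpos
    rcases hw : vertexType w with a | o
    · exact not_cross_outerSide_of_support hw hc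
    rcases hv : vertexType v with a | o'
    · exact not_cross_outerSide_of_support hv hc.symm
    rw [hv, hw] at hpos
    simp [supportDegree] at hpos
  have hFdeg : ∀ v, (Finset.univ.filter fun w => F.Adj v w).card + outerDegree v = e + 2 := by
    intro v
    have h := sum_adj_eq_sum_typeDegree F vertexType v fun _ => 1
    simp only [htype] at h
    rw [sum_supportDegree hn] at h
    rw [Finset.sum_const, nsmul_eq_mul, mul_one] at h
    suffices ((Finset.univ.filter fun w => F.Adj v w).card : ℝ) + outerDegree v = e + 2 by
      exact_mod_cast this
    rw [h]
    rcases v with ⟨j, s, v⟩ | ⟨j, v⟩ | v <;> simp only [vertexType, outerDegree] <;> push_cast <;>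
      ring
  have hdeg : ∀ G, PartialCompletion F (outerSide true) (outerSide false) outerDegree g G → ∀ v,
      (Finset.univ.filter fun w => G.Adj v w).card =
        crossDegree G (outerSide true) (outerSide false) v +
          (Finset.univ.filter fun w => F.Adj v w).card := by
    intro G hG v
    rw [← Finset.card_filter_add_card_filter_not
      (fun w => Cross (outerSide true) (outerSide false) v w), Finset.filter_filter,
      Finset.filter_filter]
    congr 2
    ext w
    simp only [Finset.mem_filter, Finset.mem_univ, true_and]
    constructor
    · rintro ⟨h, hc⟩
      exact (hG.adj_iff v w hc).1 h
    · intro h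
      exact ⟨(hG.adj_iff v w (hFcross v w h)).2 h, hFcross v w h⟩
  have hFF : PartialCompletion F (outerSide true) (outerSide false) outerDegree g F := by
    refine ⟨hF, fun _ _ _ => Iff.rfl, fun w => ?_⟩
    rw [crossDegree, Finset.card_eq_zero.2]
    · exact Nat.zero_le _
    · exact Finset.filter_eq_empty_iff.2 fun z _ h => hFcross w z h.1 h.2
  obtain ⟨G, hG, hcross⟩ := exists_completion hg disjoint_outerSide hFF sum_outerDegree_outerSide
    (2 * ∑ i ∈ Finset.range (g + 1), (e + 1) ^ i)
    (fun G hG u => by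
      have hle : ∀ w, ∑ c with G.Adj w c, (1 : ℝ) ≤ e + 2 := by
        intro w
        have h₁ := hdeg G hG w
        have h₂ := hFdeg w
        have h₃ := hG.crossDegree_le w
        rw [Finset.sum_const, nsmul_eq_mul, mul_one]
        exact_mod_cast (by omega : (Finset.univ.filter fun c => G.Adj w c).card ≤ e + 2)
      have := card_near_le (G := G) (fun _ _ => 1) 2 (e + 1) (by positivity) (by norm_num)
        (fun _ _ => le_rfl) (fun w => (hle w).trans (by linarith [(Nat.cast_nonneg e : (0 : ℝ) ≤ e)]))
        (fun p w _ => (hle w).trans (by linarith)) g u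
      exact_mod_cast this)
    (by
      refine (show 2 * (2 * _) = 4 * _ by ring).trans_lt (hK.trans_le ?_)
      refine (show K = (Finset.univ : Finset (Fin K)).card by simp).trans_le ?_
      refine Finset.card_le_card_of_injOn (fun k => .inr (.inr (true, k))) (fun k _ => ?_)
        fun k _ k' _ h => by simpa using h
      exact Finset.mem_coe.2 (Finset.mem_filter.2 ⟨mem_outerSide_iff.2 rfl, Nat.succ_pos _⟩))
  refine ⟨G, hG.noShortCycle, fun v => ?_, fun v a => ?_⟩
  · have hv : crossDegree G (outerSide true) (outerSide false) v = outerDegree v := by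
      rcases v with v | ⟨j, k, v⟩ | ⟨k, v⟩
      · exact Nat.le_zero.1 (hG.crossDegree_le _)
      · apply hcross
        cases k <;> simp [mem_outerSide_iff]
      · apply hcross
        cases k <;> simp [mem_outerSide_iff]
    rw [hdeg G hG, hv, add_comm, hFdeg]
  · rw [← htype]
    unfold typeDegree
    congr 1
    ext w
    simp only [Finset.mem_filter, Finset.mem_univ, true_and]
    exact and_congr_left fun hw => hG.adj_iff v w (not_cross_outerSide_of_support hw)

end Construction

/-! ### Localized eigenvectors -/

section Iso

variable {U W : Type*} [Fintype U] [Fintype W] {G : SimpleGraph U} {H : SimpleGraph W}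

lemma adjMat_mulVec_apply (G : SimpleGraph U) (f : U → ℝ) (v : U) :
    (adjMat G).mulVec f v = ∑ w with G.Adj v w, f w := by
  let := Classical.decRel G.Adj
  unfold adjMat
  rw [SimpleGraph.adjMatrix_mulVec_apply]
  refine Finset.sum_congr ?_ fun _ _ => rfl
  ext w
  simp

lemma HasLocalizedEigenvector.of_iso (φ : G ≃g H) {μ : ℝ} {k : ℕ} {ε : ℝ}
    (h : HasLocalizedEigenvector G μ k ε) : HasLocalizedEigenvector H μ k ε := by
  obtain ⟨f, hf, hnorm, S, hS, hε⟩ := h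
  refine ⟨f ∘ φ.symm, ?_, ?_, S.map φ.toEquiv.toEmbedding, by simpa using hS, ?_⟩
  · ext v
    have hv := congrFun hf (φ.symm v)
    rw [adjMat_mulVec_apply] at hv ⊢
    rw [Pi.smul_apply, Function.comp_apply, ← Pi.smul_apply, ← hv]
    refine Finset.sum_equiv φ.symm.toEquiv (fun w => ?_) fun w _ => rfl
    simpa using (φ.symm.map_adj_iff (v := v) (w := w)).symm
  · rw [← hnorm]
    exact Equiv.sum_comp φ.symm.toEquiv fun x => f x ^ 2
  · simpa using hε

lemma LocalizedSpectrum.of_iso (φ : G ≃g H) {r : ℕ} {ε b : ℝ} (h : LocalizedSpectrum G r ε b) :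
    LocalizedSpectrum H r ε b := by
  obtain ⟨Λ, hΛ, h⟩ := h
  refine ⟨Λ, hΛ, fun μ hμ => ?_⟩
  obtain ⟨k, hk, h⟩ := h μ hμ
  exact ⟨k, hk, h.of_iso φ⟩

lemma IsRegular.of_iso (φ : G ≃g H) {k : ℕ} (h : IsRegular G k) : IsRegular H k := by
  intro v
  rw [← h (φ.symm v)]
  exact Set.ncard_congr' (φ.symm.mapNeighborSet v)

/-- An eigenvector supported on `S` is localized. -/
lemma hasLocalizedEigenvector_of_support {f : U → ℝ} {μ : ℝ} {S : Finset U} {ε : ℝ} (hε : ε ≤ 1)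
    (hf : (adjMat G).mulVec f = μ • f) (h0 : f ≠ 0) (hS : ∀ x, x ∉ S → f x = 0) :
    HasLocalizedEigenvector G μ S.card ε := by
  obtain ⟨x, hx⟩ := Function.ne_iff.1 h0
  have hpos : 0 < ∑ x, f x ^ 2 :=
    Finset.sum_pos' (fun _ _ => sq_nonneg _) ⟨x, Finset.mem_univ x, sq_pos_of_ne_zero hx⟩
  have hnorm : ∑ x, ((√(∑ x, f x ^ 2))⁻¹ • f) x ^ 2 = 1 := by
    simp only [Pi.smul_apply, smul_eq_mul, mul_pow, ← Finset.mul_sum, inv_pow, Real.sq_sqrt hpos.le]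
    exact inv_mul_cancel₀ hpos.ne'
  refine ⟨_, ?_, hnorm, S, rfl, ?_⟩
  · rw [Matrix.mulVec_smul, hf, smul_comm]
  · rw [Finset.sum_subset (Finset.subset_univ S) fun x _ hx => by simp [hS x hx], hnorm]
    exact hε

end Iso

section Waves

variable {n e M K : ℕ} [NeZero n]

/-- The wave of frequency `k` on the support, antisymmetric in the sign. -/
def wave (k : ZMod n) : VertexType n → ℝ
  | .inl (j, s) => (if s then 1 else -1) * (ZMod.stdAddChar (k * j)).re
  | .inr _ => 0

lemma re_stdAddChar_add_sub (k j : ZMod n) :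
    (ZMod.stdAddChar (k * (j + 1))).re + (ZMod.stdAddChar (k * (j - 1))).re =
      2 * (ZMod.stdAddChar k).re * (ZMod.stdAddChar (k * j)).re := by
  rw [mul_add, mul_sub, mul_one, sub_eq_add_neg, AddChar.map_add_eq_mul, AddChar.map_add_eq_mul,
    AddChar.map_neg_eq_conj]
  simp only [Complex.mul_re, Complex.conj_re, Complex.conj_im]
  ring

lemma adjMat_mulVec_wave (hn : 3 ≤ n) {G : SimpleGraph (Vertex n e M K)}
    (hG : ∀ v a, typeDegree G vertexType v (.inl a) = supportDegree n e (vertexType v) (.inl a))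
    (k : ZMod n) :
    (adjMat G).mulVec (wave k ∘ vertexType) =
      (2 * (ZMod.stdAddChar k).re) • (wave k ∘ vertexType) := by
  ext v
  rw [adjMat_mulVec_apply]
  simp only [Function.comp_apply, Pi.smul_apply, smul_eq_mul]
  rw [sum_adj_eq_sum_typeDegree G vertexType v (wave k), Fintype.sum_sum_type]
  simp only [hG]
  rw [show ∑ o, (typeDegree G vertexType v (.inr o) : ℝ) * wave k (.inr o) = 0 by simp [wave],
    add_zero]
  rcases vertexType v with ⟨j, s⟩ | _ | j
  · rw [sum_supportDegree_support hn j s fun a => wave k (.inl a)]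
    simp only [wave]
    linear_combination (if s then (1 : ℝ) else -1) * re_stdAddChar_add_sub k j
  · simp [supportDegree, wave]
  · rw [sum_supportDegree_boundary j fun a => wave k (.inl a)]
    simp [wave]

/-- The support vertices. -/
def supportSet : Finset (Vertex n e M K) :=
  Finset.univ.map .inl

lemma card_supportSet : (supportSet : Finset (Vertex n e M K)).card = 4 * n * M := by
  simp [supportSet, ZMod.card]
  ring

lemma re_stdAddChar_natCast (k : ℕ) :
    (ZMod.stdAddChar (k : ZMod n)).re = Real.cos (2 * Real.pi * k / n) := by
  have := ZMod.stdAddChar_coe (N := n) k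
  rw [Int.cast_natCast] at this
  rw [this, ← Complex.exp_ofReal_mul_I_re]
  congr 2
  push_cast
  ring

lemma localizedSpectrum_of_supportDegree (hn : 3 ≤ n) (hM : 0 < M)
    {G : SimpleGraph (Vertex n e M K)}
    (hG : ∀ v a, typeDegree G vertexType v (.inl a) = supportDegree n e (vertexType v) (.inl a))
    {r : ℕ} (hr : 2 * r ≤ n) {ε b : ℝ} (hε : ε ≤ 1) (hb : 4 * n * M ≤ b) :
    LocalizedSpectrum G r ε b := by
  refine ⟨(Finset.range r).image fun k : ℕ => 2 * Real.cos (2 * Real.pi * k / n), ?_, ?_⟩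
  · rw [Finset.card_image_of_injOn, Finset.card_range]
    have hnpos : (0 : ℝ) < n := by exact_mod_cast (by omega : 0 < n)
    have hmem : ∀ k ∈ (Finset.range r : Set ℕ),
        2 * Real.pi * k / n ∈ Set.Icc 0 Real.pi := by
      intro k hk
      have hk : (2 * k : ℝ) ≤ n := by
        exact_mod_cast (by have := Finset.mem_range.1 hk; omega : 2 * k ≤ n)
      refine ⟨by positivity, (div_le_iff₀ hnpos).2 ?_⟩
      nlinarith [Real.pi_pos]
    intro k hk l hl h
    have := Real.injOn_cos (hmem k hk) (hmem l hl) (mul_left_cancel₀ two_ne_zero h)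
    rw [div_left_inj' hnpos.ne', mul_right_inj' (by positivity)] at this
    exact_mod_cast this
  · intro μ hμ
    obtain ⟨k, -, rfl⟩ := Finset.mem_image.1 hμ
    refine ⟨4 * n * M, by exact_mod_cast hb, ?_⟩
    rw [← card_supportSet (n := n) (e := e) (M := M) (K := K), ← re_stdAddChar_natCast]
    refine hasLocalizedEigenvector_of_support hε (adjMat_mulVec_wave hn hG (k : ZMod n)) ?_ ?_
    · intro h
      have := congrFun h (.inl (0, true, true, ⟨0, hM⟩))
      simp [vertexType, wave] at this
    · rintro (v | v) hv
      · exact absurd (Finset.mem_map_of_mem _ (Finset.mem_univ v)) hv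
      · rcases v with v | v <;> rfl

/-- A regular graph on `m` vertices without cycles shorter than `g` and with localized
eigenvectors. -/
lemma exists_graph_fin (hn : 3 ≤ n) (he : 1 ≤ e) {g : ℕ} (hg : 2 ≤ g) {α t : ℝ} (hα : 1 ≤ α)
    (ht : 1 ≤ t) (h₁ : α + e ≤ t * α) (h₂ : 2 * α + e ≤ t ^ 2 + 1)
    (hM : (α + t) * ∑ i ∈ Finset.range (g + 1), t ^ i < M)
    (hK : 4 * ∑ i ∈ Finset.range (g + 1), (e + 1) ^ i < K)
    {r m : ℕ} (hr : 2 * r ≤ n) {ε b : ℝ} (hε : ε ≤ 1) (hb : 4 * n * M ≤ b)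
    (hm : 4 * n * M + 2 * n * M * e + 2 * K = m) :
    ∃ G : SimpleGraph (Fin m), IsRegular G (e + 2) ∧ g ≤ G.girth ∧ LocalizedSpectrum G r ε b := by
  have hMpos : 0 < M := by
    rcases Nat.eq_zero_or_pos M with rfl | h
    · have : 0 ≤ (α + t) * ∑ i ∈ Finset.range (g + 1), t ^ i := by positivity
      exact absurd hM (by simpa using this)
    · exact h
  obtain ⟨G, hcyc, hreg, htype⟩ := exists_regular_graph (n := n) (K := K) hn he hg hα ht h₁ h₂ hM hK
  have hcard : Fintype.card (Vertex n e M K) = m := by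
    rw [← hm]
    simp [ZMod.card]
    ring
  have : Nonempty (Vertex n e M K) := ⟨.inl (0, true, true, ⟨0, hMpos⟩)⟩
  have hregG : IsRegular G (e + 2) := fun v => by
    rw [← hreg v, ← Set.ncard_coe_finset]
    congr 1
    ext w
    simp
  have hac : ¬ G.IsAcyclic := not_isAcyclic_of_degree G (e + 2) (by omega) fun v => by
    rw [← hreg v, ← SimpleGraph.card_neighborFinset_eq_degree]
    congr 1
    ext w
    simp
  let φ := SimpleGraph.Iso.map (Fintype.equivFinOfCardEq hcard) G
  refine ⟨_, hregG.of_iso φ, ?_,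
    (localizedSpectrum_of_supportDegree hn hMpos htype hr hε hb).of_iso φ⟩
  rw [← φ.girth_eq]
  exact hcyc.le_girth hac

end Waves

/-! ### Choice of parameters -/

section Parameters

/-- A growth rate `t < √(2 * d - 1)` and an edge weight for which balls in the support and its
boundary grow by a factor of `t`. -/
lemma exists_growth_rate {d : ℝ} (hd : 2 ≤ d) : ∃ t a : ℝ, 1 < t ∧ t ^ 2 < 2 * d - 1 ∧ 1 ≤ a ∧
    a + (d - 1) ≤ t * a ∧ 2 * a + (d - 1) ≤ t ^ 2 + 1 := by
  set s := √(2 * d - 1)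
  have hsq : s ^ 2 = 2 * d - 1 := Real.sq_sqrt (by linarith)
  have hs : 1 < s := Real.lt_sqrt_of_sq_lt (by linarith)
  have hcont : Continuous fun t : ℝ => (t - 1) * (t ^ 2 - d + 2) := by fun_prop
  have hlt : 2 * (d - 1) < (s - 1) * (s ^ 2 - d + 2) := by
    have hd' : d = (s ^ 2 + 1) / 2 := by linarith
    rw [hd']
    nlinarith [pow_pos (sub_pos.2 hs) 3]
  obtain ⟨t, ⟨ht, hts⟩, ht1⟩ :=
    ((((hcont.tendsto s).eventually (lt_mem_nhds hlt)).filter_mono nhdsWithin_le_nhds).and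
      (self_mem_nhdsWithin (s := Set.Iio s)) |>.and
      ((lt_mem_nhds hs).filter_mono nhdsWithin_le_nhds)).exists
  have hts : t < s := hts
  have ht0 : 0 < t - 1 := by linarith
  have hmul : t * ((d - 1) / (t - 1)) = (d - 1) / (t - 1) + (d - 1) := by
    field_simp
    ring
  refine ⟨t, (d - 1) / (t - 1), ht1, by nlinarith, ?_, hmul.ge, ?_⟩
  · rw [one_le_div ht0]
    nlinarith [sq_nonneg (d - 1)]
  · have : 2 * (d - 1) / (t - 1) ≤ t ^ 2 - d + 2 := by
      rw [div_le_iff₀ ht0]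
      linarith
    rw [mul_div_assoc] at this
    linarith

lemma eventually_linear_mul_pow_le {τ d : ℝ} (hτ : 0 ≤ τ) (hτd : τ < d) (A : ℝ) :
    ∀ᶠ D : ℕ in Filter.atTop, A * (2 * D + 3) * τ ^ D ≤ d ^ D := by
  have hd : 0 < d := hτ.trans_lt hτd
  have h0 : 0 ≤ τ / d := by positivity
  have h1 : τ / d < 1 := (div_lt_one hd).2 hτd
  have hlim : Filter.Tendsto (fun D : ℕ => A * (2 * (D * (τ / d) ^ D) + 3 * (τ / d) ^ D))
      Filter.atTop (nhds (A * (2 * 0 + 3 * 0))) :=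
    (((tendsto_self_mul_const_pow_of_lt_one h0 h1).const_mul 2).add
      ((tendsto_pow_atTop_nhds_zero_of_lt_one h0 h1).const_mul 3)).const_mul A
  filter_upwards [hlim.eventually (ge_mem_nhds (by norm_num : A * (2 * 0 + 3 * 0) < 1))] with D hD
  have hpos : 0 < d ^ D := by positivity
  rw [div_pow] at hD
  calc A * (2 * D + 3) * τ ^ D
      = A * (2 * (D * (τ ^ D / d ^ D)) + 3 * (τ ^ D / d ^ D)) * d ^ D := by
        field_simp
    _ ≤ 1 * d ^ D := mul_le_mul_of_nonneg_right hD hpos.le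
    _ = d ^ D := one_mul _

lemma sum_range_pow_le {t : ℝ} (ht : 1 < t) (g : ℕ) :
    ∑ i ∈ Finset.range (g + 1), t ^ i ≤ t ^ (g + 1) / (t - 1) := by
  rw [geom_sum_eq ht.ne']
  exact div_le_div_of_nonneg_right (by linarith) (by linarith)

/-- For `t < √(2 * d - 1)`, balls of radius `2 * D * log d / log (2 * d - 1)` with growth rate `t`
are small compared with `d ^ D`. -/
lemma eventually_support_le {d t b ρ : ℝ} (hρ : (2 * d - 1) ^ ρ = d) (hρ0 : 0 < ρ)
    (ht : 1 < t) (htd : t ^ 2 < 2 * d - 1) (hb : 0 ≤ b) {c : ℝ} (hc : 0 ≤ c) :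
    ∀ᶠ D : ℕ in Filter.atTop, c * (2 * D + 3) *
      (⌊b * ∑ i ∈ Finset.range (⌈2 * (D + 1) * ρ⌉₊ + 1), t ^ i⌋₊ + 1 : ℕ) ≤ d ^ D := by
  have hτ1 : 1 ≤ t ^ (2 * ρ) := Real.one_le_rpow ht.le (by linarith)
  have hτd : t ^ (2 * ρ) < d := by
    rw [Real.rpow_mul (by linarith), Real.rpow_two]
    exact (Real.rpow_lt_rpow (by positivity) htd hρ0).trans_eq hρ
  filter_upwards [eventually_linear_mul_pow_le (by linarith) hτd
    (c * (b * (t ^ (2 : ℕ) * t ^ (2 * ρ) / (t - 1)) + 1))] with D hD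
  rw [mul_right_comm c, mul_assoc] at hD
  refine le_trans ?_ hD
  refine mul_le_mul_of_nonneg_left ?_ (by positivity)
  have hgle : (⌈2 * (D + 1) * ρ⌉₊ : ℝ) ≤ 2 * (D + 1) * ρ + 1 :=
    (Nat.ceil_lt_add_one (by positivity)).le
  have hsum : b * ∑ i ∈ Finset.range (⌈2 * (D + 1) * ρ⌉₊ + 1), t ^ i ≤
      b * (t ^ (2 : ℕ) * t ^ (2 * ρ) / (t - 1)) * (t ^ (2 * ρ)) ^ D := by
    rw [mul_assoc b (_ / _)]
    refine mul_le_mul_of_nonneg_left ((sum_range_pow_le ht _).trans ?_) hb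
    rw [div_mul_eq_mul_div, mul_assoc (t ^ 2), ← pow_succ', ← Real.rpow_mul_natCast (by linarith),
      ← Real.rpow_natCast, ← Real.rpow_natCast, ← Real.rpow_add (by linarith)]
    refine div_le_div_of_nonneg_right (Real.rpow_le_rpow_of_exponent_le ht.le ?_) (by linarith)
    push_cast
    linarith
  rw [Nat.cast_add_one, add_mul, one_mul]
  exact add_le_add ((Nat.floor_le (by positivity)).trans hsum) (one_le_pow₀ hτ1)

/-- The choice of parameters, for a large number `D` of localized eigenvectors. -/
lemma exists_parameters {d : ℕ} (hd : 3 ≤ d) {α : ℝ} (hα : α ∈ Set.Ioo (0 : ℝ) (1 / 6)) (N : ℕ) :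
    ∃ (D g M K m : ℕ) (t a : ℝ), 2 ≤ g ∧ 1 ≤ t ∧ 1 ≤ a ∧ a + (d - 1 : ℕ) ≤ t * a ∧
      2 * a + (d - 1 : ℕ) ≤ t ^ 2 + 1 ∧
      (a + t) * ∑ i ∈ Finset.range (g + 1), t ^ i < M ∧
      4 * ∑ i ∈ Finset.range (g + 1), (d - 1 + 1) ^ i < K ∧
      4 * (2 * D + 3) * M + 2 * (2 * D + 3) * M * (d - 1) + 2 * K = m ∧
      4 * (2 * D + 3 : ℕ) * M ≤ (m : ℝ) ^ α ∧ ⌊α * Real.logb d m⌋₊ = D ∧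
      2 * α * Real.logb (2 * (d : ℝ) - 1) m ≤ g ∧ N < m := by
  obtain ⟨hα0, hα6⟩ := hα
  have hd3 : (3 : ℝ) ≤ d := by exact_mod_cast hd
  have hd1 : ((d - 1 : ℕ) : ℝ) = d - 1 := by rw [Nat.cast_sub (by omega), Nat.cast_one]
  obtain ⟨t, a, ht, htd, ha, h₁, h₂⟩ := exists_growth_rate (d := d) (by linarith)
  have hq1 : 1 < 2 * (d : ℝ) - 1 := by linarith
  obtain ⟨ρ, hρ⟩ : ∃ ρ, ρ = Real.logb (2 * (d : ℝ) - 1) d := ⟨_, rfl⟩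
  have hqρ : (2 * (d : ℝ) - 1) ^ ρ = d := by
    rw [hρ]
    exact Real.rpow_logb (by linarith) hq1.ne' (by linarith)
  have hρ1 : ρ ≤ 1 := by
    rw [hρ, Real.logb_le_iff_le_rpow hq1 (by linarith), Real.rpow_one]
    linarith
  have hρ2 : 1 ≤ 2 * ρ := by
    rw [hρ, ← Real.logb_rpow_eq_mul_logb_of_pos (by linarith),
      Real.le_logb_iff_rpow_le hq1 (by positivity), Real.rpow_one, Real.rpow_two]
    nlinarith [sq_nonneg ((d : ℝ) - 1)]
  have hρ0 : 0 < ρ := by linarith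
  obtain ⟨D, hbase, hDN⟩ := ((eventually_support_le (b := a + t) (c := 4 + 2 * d) hqρ hρ0
    ht htd (by linarith) (by positivity)).and
    (Filter.eventually_ge_atTop (max N 3))).exists
  have hN : N ≤ D := le_of_max_le_left hDN
  have hD3 : 3 ≤ D := le_of_max_le_right hDN
  obtain ⟨g, hg⟩ : ∃ g, g = ⌈2 * (D + 1) * ρ⌉₊ := ⟨_, rfl⟩
  have hgle : (g : ℝ) ≤ 2 * (D + 1) * ρ + 1 := hg ▸ (Nat.ceil_lt_add_one (by positivity)).le
  have hleg : 2 * (D + 1) * ρ ≤ g := hg ▸ Nat.le_ceil _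
  rw [← hg] at hbase
  obtain ⟨M, hM⟩ : ∃ M, M = ⌊(a + t) * ∑ i ∈ Finset.range (g + 1), t ^ i⌋₊ + 1 := ⟨_, rfl⟩
  have hMlt : (a + t) * ∑ i ∈ Finset.range (g + 1), t ^ i < M := by
    rw [hM]
    exact_mod_cast Nat.lt_floor_add_one _
  rw [← hM] at hbase
  clear hM hg
  obtain ⟨X, hX⟩ : ∃ X : ℝ, X = d ^ (D / α) := ⟨_, rfl⟩
  have hXD : (d : ℝ) ^ (6 * D) ≤ X := by
    rw [hX, ← Real.rpow_natCast]
    refine Real.rpow_le_rpow_of_exponent_le (by linarith) ?_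
    rw [le_div_iff₀ hα0]
    push_cast
    nlinarith [(Nat.cast_nonneg D : (0 : ℝ) ≤ D)]
  have hDX : (d : ℝ) ^ D ≤ X := (pow_le_pow_right₀ (by linarith) (by omega)).trans hXD
  have hX1 : 1 ≤ X := (one_le_pow₀ (by linarith)).trans hDX
  obtain ⟨K, hXK, hKX⟩ : ∃ K : ℕ, X ≤ K ∧ (K : ℝ) ≤ X + 1 :=
    ⟨⌈X⌉₊, Nat.le_ceil _, (Nat.ceil_lt_add_one (by linarith)).le⟩
  obtain ⟨m, hm⟩ : ∃ m, 4 * (2 * D + 3) * M + 2 * (2 * D + 3) * M * (d - 1) + 2 * K = m := ⟨_, rfl⟩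
  have hmcast : (m : ℝ) = (2 + 2 * d) * (2 * D + 3) * M + 2 * K := by
    rw [← hm]
    push_cast [hd1]
    ring
  have hnM : (0 : ℝ) ≤ (2 * D + 3) * M := by positivity
  have hXm : X ≤ m := by
    have : 0 ≤ (2 + 2 * d : ℝ) * (2 * D + 3) * M := by positivity
    linarith
  have hmX : (m : ℝ) < d ^ ((D + 1) / α) := by
    have hsix : (d : ℝ) ^ (6 : ℕ) ≤ d ^ (1 / α) := by
      rw [← Real.rpow_natCast]
      refine Real.rpow_le_rpow_of_exponent_le (by linarith) ?_
      rw [le_div_iff₀ hα0]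
      push_cast
      linarith
    have h6 : (3 : ℝ) ^ 6 ≤ d ^ 6 := pow_le_pow_left₀ (by norm_num) hd3 6
    have h5 : (5 : ℝ) < d ^ (1 / α) := by linarith
    rw [add_div, Real.rpow_add (by linarith), ← hX]
    linarith [mul_lt_mul_of_pos_left h5 (by linarith : 0 < X)]
  have hmpos : (0 : ℝ) < m := by linarith
  have hlog₁ : D / α ≤ Real.logb d m :=
    (Real.le_logb_iff_rpow_le (by linarith) hmpos).2 (hX ▸ hXm)
  have hlog₂ : Real.logb d m < (D + 1) / α := (Real.logb_lt_iff_lt_rpow (by linarith) hmpos).2 hmX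
  rw [div_le_iff₀' hα0] at hlog₁
  rw [lt_div_iff₀' hα0] at hlog₂
  refine ⟨D, g, M, K, m, t, a, ?_, ht.le, ha, by rwa [hd1], by rwa [hd1], hMlt, ?_, hm, ?_, ?_, ?_,
    ?_⟩
  · have : (2 : ℝ) ≤ g := by
      have hD : (3 : ℝ) ≤ D := by exact_mod_cast hD3
      linarith [mul_le_mul_of_nonneg_left hρ2 (by linarith : 0 ≤ (D : ℝ) + 1)]
    exact_mod_cast this
  · have hgD : g ≤ 2 * D + 3 := by
      have : (g : ℝ) ≤ 2 * D + 3 := by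
        linarith [mul_le_mul_of_nonneg_left hρ1 (by positivity : 0 ≤ (D : ℝ) + 1)]
      exact_mod_cast this
    rw [Nat.sub_add_cancel (by omega)]
    calc 4 * ∑ i ∈ Finset.range (g + 1), d ^ i < d ^ 2 * d ^ (g + 1) :=
          mul_lt_mul'' (by nlinarith) (Nat.geomSum_lt (by omega) fun i hi => Finset.mem_range.1 hi)
            (Nat.zero_le _) (Nat.zero_le _)
      _ = d ^ (g + 3) := by ring
      _ ≤ d ^ (6 * D) := Nat.pow_le_pow_right (by omega) (by omega)
      _ ≤ K := by exact_mod_cast hXD.trans hXK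
  · calc (4 * (2 * D + 3 : ℕ) * M : ℝ) ≤ (d : ℝ) ^ D := by
          push_cast
          linarith [mul_nonneg (Nat.cast_nonneg d : (0 : ℝ) ≤ d) hnM]
      _ = X ^ α := by
          rw [hX, ← Real.rpow_mul (by linarith), div_mul_cancel₀ _ hα0.ne', Real.rpow_natCast]
      _ ≤ (m : ℝ) ^ α := Real.rpow_le_rpow (by linarith) hXm hα0.le
  · rw [Nat.floor_eq_iff ((Nat.cast_nonneg D).trans hlog₁)]
    exact ⟨hlog₁, hlog₂⟩
  · rw [← Real.mul_logb (a := 2 * (d : ℝ) - 1) (b := d) (by linarith) (by linarith) (by linarith),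
      ← hρ]
    linarith [mul_le_mul_of_nonneg_right hlog₂.le hρ0.le]
  · have hDd : D < d ^ D := Nat.lt_pow_self (by omega)
    have : d ^ D ≤ m := by exact_mod_cast hDX.trans hXm
    omega

end Parameters

/-- Alon–Ganguly–Srivastava (Theorem 1.1). -/
theorem stmt_0 (d : ℕ) (hdp : Nat.Prime d) (hdodd : Odd d)
    (α : ℝ) (hα : α ∈ Set.Ioo (0 : ℝ) (1 / 6))
    (ε : ℝ) (hε : ε ∈ Set.Ioo (0 : ℝ) 1) :
    ∃ C : ℝ, 0 < C ∧
      {m : ℕ | 0 < m ∧ ∃ G : SimpleGraph (Fin m),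
        IsRegular G (d + 1) ∧
        girthGe G (2 * α * Real.logb (2 * (d : ℝ) - 1) m) ∧
        LocalizedSpectrum G ⌊α * Real.logb d m⌋₊ ε (C * (m : ℝ) ^ α)}.Infinite := by
  have hd : 3 ≤ d := by
    have := hdp.two_le
    have : d ≠ 2 := fun h => by simp [h, Nat.odd_iff] at hdodd
    omega
  refine ⟨1, one_pos, Set.infinite_of_forall_exists_gt fun N => ?_⟩
  obtain ⟨D, g, M, K, m, t, a, hg, ht, ha, h₁, h₂, hM, hK, hm, hb, hfloor, hgirth, hN⟩ :=
    exists_parameters hd hα N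
  obtain ⟨G, hreg, hG, hspec⟩ := exists_graph_fin (n := 2 * D + 3) (e := d - 1) (K := K) (r := D)
    (by omega) (by omega) hg ha ht h₁ h₂ hM hK (by omega) hε.2.le hb hm
  refine ⟨m, ⟨by omega, G, ?_, fun g' hg' => ?_, ?_⟩, hN⟩
  · rwa [show d - 1 + 2 = d + 1 by omega] at hreg
  · exact hgirth.trans (by exact_mod_cast hG.trans_eq hg')
  · rwa [hfloor, one_mul]

end Formal
end
end

section
/- Let p_j denote the j-th prime. For every j ≥ 10 (i.e., whenever p_j ≥ 29), the prime gap satisfies p_{j+1} − p_j < (1/5)·p_j; equivalently, for every prime p ≥ 29 there is a prime q with p < q < (6/5)·p. -/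
open Classical

set_option linter.unusedSectionVars false

noncomputable section

namespace Formal

variable {V : Type*} [Fintype V] [DecidableEq V]

/-- The convexity inequality for `x ↦ x * log x - x`, with the slope at the right endpoint. -/
lemma sub_le_mul_log_sub_log {a b : ℝ} (ha : 0 < a) (hb : 0 < b) :
    b - a ≤ b * (Real.log b - Real.log a) := by
  have h := Real.log_le_sub_one_of_pos (div_pos ha hb)
  rw [Real.log_div ha.ne' hb.ne'] at h
  have h' := mul_le_mul_of_nonneg_left h hb.le
  have : b * (a / b - 1) = a - b := by field_simp
  linarith

lemma mul_log_le_log_factorial (n : ℕ) (hn : 1 ≤ n) :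
    n * Real.log n - n + 1 ≤ Real.log n.factorial := by
  induction n, hn using Nat.le_induction with
  | base => simp
  | succ n hn ih =>
    have hn' : (0 : ℝ) < n := by exact_mod_cast hn
    have h := sub_le_mul_log_sub_log (b := n) (a := n + 1) (by positivity) hn'
    rw [Nat.factorial_succ, Nat.cast_mul, Real.log_mul (by positivity) (by positivity)]
    push_cast
    linarith

lemma log_factorial_le_mul_log (n : ℕ) (hn : 1 ≤ n) :
    Real.log n.factorial ≤ n * Real.log n - n + 1 + Real.log n := by
  induction n, hn using Nat.le_induction with
  | base => simp
  | succ n hn ih =>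
    have hn' : (0 : ℝ) < n := by exact_mod_cast hn
    have h := sub_le_mul_log_sub_log (b := (n : ℝ) + 1) (a := n) hn' (by positivity)
    rw [Nat.factorial_succ, Nat.cast_mul, Real.log_mul (by positivity) (by positivity)]
    push_cast
    linarith

/-- Stirling's formula with a logarithmic error, for the factorial of a floor quotient. -/
lemma abs_log_factorial_div_sub_le {n k : ℕ} (hk : 0 < k) (hkn : k ≤ n) :
    |Real.log (n / k).factorial -
      ((n / k : ℝ) * (Real.log n - Real.log k) - n / k + 1)| ≤ Real.log n - Real.log k := by
  have hk' : (0 : ℝ) < k := by exact_mod_cast hk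
  have hn' : (0 : ℝ) < n := by exact_mod_cast hk.trans_le hkn
  rw [← Real.log_div hn'.ne' hk'.ne']
  have hm : 1 ≤ n / k := (Nat.one_le_div_iff hk).2 hkn
  have hlow := mul_log_le_log_factorial _ hm
  have hupp := log_factorial_le_mul_log _ hm
  have hmx : ((n / k : ℕ) : ℝ) ≤ n / k := Nat.cast_div_le
  have hxm : (n / k : ℝ) ≤ (n / k : ℕ) + 1 := by
    rw [div_le_iff₀ hk']
    have := (Nat.lt_mul_div_succ n hk).le
    rw [mul_comm]
    exact_mod_cast this
  have hx : (0 : ℝ) < n / k := by positivity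
  generalize ((n : ℝ) / k) = x at *
  generalize n / k = m at *
  have hm1 : (1 : ℝ) ≤ m := by exact_mod_cast hm
  have hm0 : (0 : ℝ) < m := by linarith
  have h₁ := sub_le_mul_log_sub_log hm0 hx
  have h₂ := sub_le_mul_log_sub_log hx hm0
  have hlog : Real.log m ≤ Real.log x := Real.log_le_log hm0 hmx
  have hlogm : 0 ≤ Real.log m := Real.log_nonneg hm1
  rw [abs_le]
  constructor <;> nlinarith

/-- The logarithm of Chebyshev's quotient `n! ⌊n/30⌋! / (⌊n/2⌋! ⌊n/3⌋! ⌊n/5⌋!)`. -/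
def chebyshevLog (n : ℕ) : ℝ :=
  Real.log n.factorial - Real.log (n / 2).factorial - Real.log (n / 3).factorial -
    Real.log (n / 5).factorial + Real.log (n / 30).factorial

set_option exponentiation.threshold 1000 in
lemma chebyshevConst_bounds :
    0.921 ≤ Real.log 2 / 2 + Real.log 3 / 3 + Real.log 5 / 5 - Real.log 30 / 30 ∧
    Real.log 2 / 2 + Real.log 3 / 3 + Real.log 5 / 5 - Real.log 30 / 30 ≤ 0.922 := by
  have h30 : Real.log 30 = Real.log 2 + Real.log 3 + Real.log 5 := by
    rw [← Real.log_mul (by norm_num) (by norm_num), ← Real.log_mul (by norm_num) (by norm_num)]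
    norm_num
  have hM : Real.log (2 ^ 14 * 3 ^ 9 * 5 ^ 5) =
      14 * Real.log 2 + 9 * Real.log 3 + 5 * Real.log 5 := by
    rw [Real.log_mul (by norm_num) (by norm_num), Real.log_mul (by norm_num) (by norm_num),
      Real.log_pow, Real.log_pow, Real.log_pow]
    norm_num
  have hupp : 8 * Real.log (2 ^ 14 * 3 ^ 9 * 5 ^ 5) ≤ 319 * Real.log 2 := by
    have := Real.log_le_log (x := (2 ^ 14 * 3 ^ 9 * 5 ^ 5) ^ 8) (y := 2 ^ 319)
      (by norm_num) (by norm_num)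
    rw [Real.log_pow, Real.log_pow] at this
    exact_mod_cast this
  have hlow : 598 * Real.log 2 ≤ 15 * Real.log (2 ^ 14 * 3 ^ 9 * 5 ^ 5) := by
    have := Real.log_le_log (x := 2 ^ 598) (y := (2 ^ 14 * 3 ^ 9 * 5 ^ 5) ^ 15)
      (by norm_num) (by norm_num)
    rw [Real.log_pow, Real.log_pow] at this
    exact_mod_cast this
  have h2 := Real.log_two_gt_d9
  have h2' := Real.log_two_lt_d9
  rw [hM] at hupp hlow
  constructor <;> linarith

lemma log_le_sqrt (n : ℕ) : Real.log n ≤ √n := by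
  rcases n.eq_zero_or_pos with rfl | hn
  · simp
  have hs : 0 < √(n : ℝ) := by positivity
  have h := Real.log_le_sub_one_of_pos (half_pos hs)
  rw [Real.log_div hs.ne' two_ne_zero, Real.log_sqrt n.cast_nonneg] at h
  linarith [Real.log_two_lt_d9]

lemma chebyshevLog_bounds {n : ℕ} (hn : 30 ≤ n) :
    0.921 * n - 1 - 5 * √n ≤ chebyshevLog n ∧ chebyshevLog n ≤ 0.922 * n + 5 * √n := by
  have h1 := abs_le.1 (abs_log_factorial_div_sub_le (n := n) (k := 1) (by simp) (by lia))
  have h2 := abs_le.1 (abs_log_factorial_div_sub_le (n := n) (k := 2) (by simp) (by lia))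
  have h3 := abs_le.1 (abs_log_factorial_div_sub_le (n := n) (k := 3) (by simp) (by lia))
  have h5 := abs_le.1 (abs_log_factorial_div_sub_le (n := n) (k := 5) (by simp) (by lia))
  have h30 := abs_le.1 (abs_log_factorial_div_sub_le (n := n) (k := 30) (by simp) hn)
  simp only [Nat.div_one, Nat.cast_one, Real.log_one, div_one, sub_zero, Nat.cast_ofNat]
    at h1 h2 h3 h5 h30
  have hA := chebyshevConst_bounds
  have hn0 : (0 : ℝ) ≤ n := n.cast_nonneg
  have hlow := mul_le_mul_of_nonneg_right hA.1 hn0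
  have hupp := mul_le_mul_of_nonneg_right hA.2 hn0
  have hlog := log_le_sqrt n
  have := Real.log_nonneg (x := 2) (by norm_num)
  have := Real.log_nonneg (x := 3) (by norm_num)
  have := Real.log_nonneg (x := 5) (by norm_num)
  have := Real.log_nonneg (x := 30) (by norm_num)
  unfold chebyshevLog
  constructor <;> nlinarith

open ArithmeticFunction in
lemma log_factorial_eq_sum_vonMangoldt (n : ℕ) :
    Real.log n.factorial = ∑ d ∈ Finset.Ioc 0 n, vonMangoldt d * ((n / d : ℕ) : ℝ) := by
  rw [← sum_Ioc_mul_zeta_eq_sum, vonMangoldt_mul_zeta]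
  induction n with
  | zero => simp
  | succ n ih =>
    rw [Nat.factorial_succ, Nat.cast_mul, Real.log_mul (by positivity) (by positivity), ih,
      Finset.sum_Ioc_succ_top (by simp), add_comm]
    simp

open ArithmeticFunction in
lemma log_factorial_div_eq_sum_vonMangoldt (n k : ℕ) :
    Real.log (n / k).factorial =
      ∑ d ∈ Finset.Ioc 0 n, vonMangoldt d * ((n / d / k : ℕ) : ℝ) := by
  rw [log_factorial_eq_sum_vonMangoldt]
  simp_rw [Nat.div_right_comm n _ k]
  refine Finset.sum_subset (Finset.Ioc_subset_Ioc_right (Nat.div_le_self n k)) fun d hd hd' ↦ ?_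
  have : n / k < d := by
    simp only [Finset.mem_Ioc] at hd hd'
    lia
  simp [Nat.div_eq_of_lt this]

open ArithmeticFunction in
lemma psi_div_eq_sum_vonMangoldt (n : ℕ) {k : ℕ} (hk : 0 < k) :
    Chebyshev.psi ((n / k : ℕ) : ℝ) =
      ∑ d ∈ Finset.Ioc 0 n, vonMangoldt d * (if k ≤ n / d then 1 else 0) := by
  rw [Chebyshev.psi, Nat.floor_natCast]
  simp only [mul_ite, mul_one, mul_zero]
  rw [← Finset.sum_filter]
  refine Finset.sum_congr ?_ fun _ _ ↦ rfl
  ext d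
  simp only [Finset.mem_Ioc, Finset.mem_filter]
  constructor
  · rintro ⟨hd, hdk⟩
    refine ⟨⟨hd, hdk.trans (Nat.div_le_self n k)⟩, ?_⟩
    rw [Nat.le_div_iff_mul_le hd]
    rw [Nat.le_div_iff_mul_le hk] at hdk
    linarith
  · rintro ⟨⟨hd, -⟩, hdk⟩
    rw [Nat.le_div_iff_mul_le hd] at hdk
    exact ⟨hd, (Nat.le_div_iff_mul_le hk).2 (by linarith)⟩

open ArithmeticFunction in
lemma chebyshevLog_eq_sum_vonMangoldt (n : ℕ) :
    chebyshevLog n = ∑ d ∈ Finset.Ioc 0 n, vonMangoldt d *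
      (((n / d : ℕ) : ℝ) - (n / d / 2 : ℕ) - (n / d / 3 : ℕ) - (n / d / 5 : ℕ) +
        (n / d / 30 : ℕ)) := by
  simp only [chebyshevLog, mul_add, mul_sub, Finset.sum_add_distrib, Finset.sum_sub_distrib,
    ← log_factorial_div_eq_sum_vonMangoldt, ← log_factorial_eq_sum_vonMangoldt]

lemma chebyshevLog_le_psi (n : ℕ) : chebyshevLog n ≤ Chebyshev.psi n := by
  rw [chebyshevLog_eq_sum_vonMangoldt, Chebyshev.psi, Nat.floor_natCast]
  refine Finset.sum_le_sum fun d _ ↦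
    mul_le_of_le_one_right ArithmeticFunction.vonMangoldt_nonneg ?_
  generalize n / d = m
  have : m + m / 30 ≤ 1 + m / 2 + m / 3 + m / 5 := by lia
  have : (m : ℝ) + (m / 30 : ℕ) ≤ 1 + (m / 2 : ℕ) + (m / 3 : ℕ) + (m / 5 : ℕ) := by
    exact_mod_cast this
  linarith

lemma psi_sub_psi_le_chebyshevLog (n : ℕ) :
    Chebyshev.psi n - Chebyshev.psi (n / 6 : ℕ) + Chebyshev.psi (n / 7 : ℕ) -
      Chebyshev.psi (n / 10 : ℕ) ≤ chebyshevLog n := by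
  have h1 := psi_div_eq_sum_vonMangoldt n one_pos
  rw [Nat.div_one] at h1
  rw [chebyshevLog_eq_sum_vonMangoldt, h1, psi_div_eq_sum_vonMangoldt n (by simp : 0 < 6),
    psi_div_eq_sum_vonMangoldt n (by simp : 0 < 7),
    psi_div_eq_sum_vonMangoldt n (by simp : 0 < 10),
    ← Finset.sum_sub_distrib, ← Finset.sum_add_distrib, ← Finset.sum_sub_distrib]
  refine Finset.sum_le_sum fun d _ ↦ ?_
  rw [← mul_sub, ← mul_add, ← mul_sub]
  refine mul_le_mul_of_nonneg_left ?_ ArithmeticFunction.vonMangoldt_nonneg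
  generalize n / d = m
  have key : (if 1 ≤ m then 1 else 0) + (if 7 ≤ m then 1 else 0) + m / 2 + m / 3 + m / 5 ≤
      m + m / 30 + (if 6 ≤ m then 1 else 0) + (if 10 ≤ m then 1 else 0) := by
    split_ifs <;> lia
  have key' : ((if 1 ≤ m then 1 else 0) + (if 7 ≤ m then 1 else 0) + (m / 2 : ℕ) + (m / 3 : ℕ) +
      (m / 5 : ℕ) : ℝ) ≤
      m + (m / 30 : ℕ) + (if 6 ≤ m then 1 else 0) + (if 10 ≤ m then 1 else 0) := by
    exact_mod_cast key
  linarith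

lemma le_psi_natCast (n : ℕ) : 0.921 * n - 1 - 5 * √n ≤ Chebyshev.psi n := by
  rcases le_or_gt 30 n with hn | hn
  · exact (chebyshevLog_bounds hn).1.trans (chebyshevLog_le_psi n)
  · have hs := Real.sq_sqrt (n.cast_nonneg (α := ℝ))
    have hs0 := Real.sqrt_nonneg (n : ℝ)
    have : √(n : ℝ) ≤ 5.5 := by
      rw [Real.sqrt_le_left (by norm_num)]
      have : (n : ℝ) ≤ 30 := by exact_mod_cast hn.le
      linarith
    nlinarith [Chebyshev.psi_nonneg n]

lemma log_four_add_four_le : Real.log 4 + 4 ≤ 5.4 := by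
  have : Real.log 4 = 2 * Real.log 2 := by
    rw [show (4 : ℝ) = 2 ^ 2 by norm_num, Real.log_pow]
    norm_num
  linarith [Real.log_two_lt_d9]

lemma sqrt_natCast_div_le (n k : ℕ) {c : ℝ} (hc : 0 ≤ c) (hkc : 1 ≤ k * c ^ 2) (hk : 0 < k) :
    √((n / k : ℕ) : ℝ) ≤ c * √n := by
  have hk' : (0 : ℝ) < k := by exact_mod_cast hk
  have h : ((n / k : ℕ) : ℝ) ≤ c ^ 2 * n := by
    refine Nat.cast_div_le.trans ?_
    rw [div_le_iff₀ hk']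
    nlinarith [n.cast_nonneg (α := ℝ)]
  calc √((n / k : ℕ) : ℝ) ≤ √(c ^ 2 * n) := Real.sqrt_le_sqrt h
    _ = c * √n := by rw [Real.sqrt_mul (sq_nonneg c), Real.sqrt_sq hc]

lemma psi_natCast_le (n : ℕ) : Chebyshev.psi n ≤ 1.078 * n + 30 * √n := by
  induction n using Nat.strong_induction_on with
  | _ n ih =>
    have hs := Real.sq_sqrt (n.cast_nonneg (α := ℝ))
    have hs0 := Real.sqrt_nonneg (n : ℝ)
    rcases le_or_gt 30 n with hn | hn
    · have h6 := ih (n / 6) (by lia)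
      have h10 := ih (n / 10) (by lia)
      have h7 := le_psi_natCast (n / 7)
      have hE := (psi_sub_psi_le_chebyshevLog n).trans (chebyshevLog_bounds hn).2
      have s6 := sqrt_natCast_div_le n 6 (c := 0.409) (by norm_num) (by norm_num) (by simp)
      have s7 := sqrt_natCast_div_le n 7 (c := 0.379) (by norm_num) (by norm_num) (by simp)
      have s10 := sqrt_natCast_div_le n 10 (c := 0.317) (by norm_num) (by norm_num) (by simp)
      have d6 : ((n / 6 : ℕ) : ℝ) ≤ n / 6 := Nat.cast_div_le
      have d10 : ((n / 10 : ℕ) : ℝ) ≤ n / 10 := Nat.cast_div_le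
      have d7 : (n : ℝ) ≤ 7 * (n / 7 : ℕ) + 7 := by
        exact_mod_cast (by lia : n ≤ 7 * (n / 7) + 7)
      have hs5 : 5 ≤ √(n : ℝ) := by
        apply Real.le_sqrt_of_sq_le
        have : (30 : ℝ) ≤ n := by exact_mod_cast hn
        linarith
      linarith
    · have : √(n : ℝ) ≤ 6 := by
        rw [Real.sqrt_le_left (by norm_num)]
        have : (n : ℝ) ≤ 30 := by exact_mod_cast hn.le
        linarith
      have h := Chebyshev.psi_le_const_mul_self (n.cast_nonneg (α := ℝ))
      nlinarith [log_four_add_four_le, n.cast_nonneg (α := ℝ)]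

lemma psi_sub_theta_natCast_le (n : ℕ) :
    Chebyshev.psi n - Chebyshev.theta n ≤ 16.2 * √n := by
  rcases n.eq_zero_or_pos with rfl | hn
  · simp
  have hn1 : (1 : ℝ) ≤ n := by exact_mod_cast hn
  have h (r : ℝ) (hr : 2 ≤ r) : Chebyshev.psi ((n : ℝ) ^ r⁻¹) ≤ 5.4 * √n := by
    have hle : (n : ℝ) ^ r⁻¹ ≤ √n := by
      rw [Real.sqrt_eq_rpow]
      refine Real.rpow_le_rpow_of_exponent_le hn1 ?_
      rw [one_div]
      gcongr
    calc Chebyshev.psi ((n : ℝ) ^ r⁻¹) ≤ Chebyshev.psi √n := Chebyshev.psi_mono hle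
      _ ≤ (Real.log 4 + 4) * √n := Chebyshev.psi_le_const_mul_self (Real.sqrt_nonneg _)
      _ ≤ 5.4 * √n := by gcongr; exact log_four_add_four_le
  linarith [Chebyshev.psi_sub_theta_le_psi_add_psi_add_psi n, h 2 le_rfl, h 3 (by norm_num),
    h 5 (by norm_num)]

lemma theta_natCast_eq_of_no_prime {m n : ℕ} (hmn : m ≤ n)
    (h : ∀ q, q.Prime → m < q → n < q) : Chebyshev.theta n = Chebyshev.theta m := by
  rw [Chebyshev.theta, Chebyshev.theta, Nat.floor_natCast, Nat.floor_natCast]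
  refine Finset.sum_congr ?_ fun _ _ ↦ rfl
  ext q
  simp only [Finset.mem_filter, Finset.mem_Ioc]
  constructor
  · rintro ⟨⟨hq, hqn⟩, hp⟩
    refine ⟨⟨hq, ?_⟩, hp⟩
    by_contra! hmq
    exact (h q hp hmq).not_ge hqn
  · rintro ⟨⟨hq, hqm⟩, hp⟩
    exact ⟨⟨hq, hqm.trans hmn⟩, hp⟩

lemma exists_prime_lt_six_fifths_of_large {n : ℕ} (hn : 4000000 ≤ n) :
    ∃ q : ℕ, q.Prime ∧ n < q ∧ 5 * q < 6 * n := by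
  by_contra! hno
  obtain ⟨N, hN, hN'⟩ : ∃ N, 5 * N < 6 * n ∧ 6 * n ≤ 5 * N + 5 := ⟨(6 * n - 1) / 5, by lia, by lia⟩
  have hθ : Chebyshev.theta N = Chebyshev.theta n :=
    theta_natCast_eq_of_no_prime (by lia) fun q hq hnq ↦ by have := hno q hq hnq; lia
  have hNr : (5 : ℝ) * N ≤ 6 * n := by exact_mod_cast hN.le
  have hNr' : (6 : ℝ) * n ≤ 5 * N + 5 := by exact_mod_cast hN'
  have hsN : √(N : ℝ) ≤ 1.1 * √n := by
    calc √(N : ℝ) ≤ √(1.1 ^ 2 * n) := Real.sqrt_le_sqrt (by linarith)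
      _ = 1.1 * √n := by rw [Real.sqrt_mul (by norm_num), Real.sqrt_sq (by norm_num)]
  have hs := Real.sq_sqrt (n.cast_nonneg (α := ℝ))
  have hs2 : 2000 ≤ √(n : ℝ) := by
    apply Real.le_sqrt_of_sq_le
    have : (4000000 : ℝ) ≤ n := by exact_mod_cast hn
    linarith
  nlinarith [le_psi_natCast N, psi_natCast_le n, psi_sub_theta_natCast_le N,
    Chebyshev.theta_le_psi n]

lemma exists_prime_of_isChain (l : List ℕ) : ∀ (a n : ℕ) (_ : a ≤ n)
    (_ : n < (a :: l).getLast (by simp))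
    (_ : List.IsChain (fun p q ↦ q.Prime ∧ 5 * q < 6 * p) (a :: l)),
    ∃ q : ℕ, q.Prime ∧ n < q ∧ 5 * q < 6 * n := by
  induction l with
  | nil =>
    intro a n han hn _
    exact absurd hn (by simpa using han)
  | cons b l ih =>
    intro a n han hn hl
    rw [List.isChain_cons_cons] at hl
    rcases lt_or_ge n b with hnb | hbn
    · exact ⟨b, hl.1.1, hnb, by have := hl.1.2; lia⟩
    · exact ih b n hbn (by simpa using hn) hl.2

lemma exists_prime_lt_six_fifths {n : ℕ} (hn : 29 ≤ n) :
    ∃ q : ℕ, q.Prime ∧ n < q ∧ 5 * q < 6 * n := by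
  rcases le_or_gt 4000000 n with h | h
  · exact exists_prime_lt_six_fifths_of_large h
  · refine exists_prime_of_isChain [31, 37, 43, 47, 53, 61, 73, 83, 97, 113, 131, 157, 181, 211,
      251, 293, 349, 409, 487, 577, 691, 829, 991, 1187, 1423, 1699, 2029, 2423, 2903, 3469, 4159,
      4987, 5981, 7177, 8609, 10321, 12379, 14851, 17807, 21347, 25609, 30727, 36871, 44221, 53051,
      63659, 76387, 91639, 109961, 131947, 158329, 189989, 227977, 273569, 328277, 393931, 472711,
      567209, 680633, 816743, 980081, 1176089, 1411297, 1693553, 2032253, 2438693, 2926421,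
      3511693, 4214009] 29 n hn ?_ ?_
    · simp only [List.getLast_cons_cons, List.getLast_singleton]
      lia
    · simp only [List.isChain_cons_cons, List.isChain_singleton]
      norm_num

lemma nthPrime_ten : nthPrime 10 = 29 := by
  have h : Nat.count Nat.Prime 29 = 9 := by decide
  rw [nthPrime, Nat.add_one_sub_one 9, ← h]
  exact Nat.nth_count (by norm_num)

/-- for `j ≥ 10` the prime gap satisfies `p_{j+1} - p_j < p_j / 5`;
equivalently, for every prime `p ≥ 29` there is a prime `q` with `p < q < (6/5)p`. -/
theorem stmt_9 :
    (∀ j : ℕ, 10 ≤ j →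
      (nthPrime (j + 1) : ℝ) - nthPrime j < (1 / 5) * nthPrime j) ∧
    (∀ p : ℕ, Nat.Prime p → 29 ≤ p →
      ∃ q : ℕ, Nat.Prime q ∧ p < q ∧ (q : ℝ) < (6 / 5) * p) := by
  constructor
  · intro j hj
    have hp : 29 ≤ nthPrime j := by
      rw [← nthPrime_ten]
      exact Nat.nth_monotone Nat.infinite_setOfPred_prime (by lia)
    obtain ⟨q, hq, hlt, hq'⟩ := exists_prime_lt_six_fifths hp
    have hle : nthPrime (j + 1) ≤ q := by
      by_contra! hcon
      obtain ⟨k, rfl⟩ : ∃ k, j = k + 1 := ⟨j - 1, by lia⟩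
      exact (Nat.le_nth_of_lt_nth_succ hcon hq).not_gt hlt
    have h₁ : (nthPrime (j + 1) : ℝ) ≤ q := by exact_mod_cast hle
    have h₂ : (5 : ℝ) * q < 6 * nthPrime j := by exact_mod_cast hq'
    linarith
  · intro p _ hp
    obtain ⟨q, hq, hlt, hq'⟩ := exists_prime_lt_six_fifths hp
    have h : (5 : ℝ) * q < 6 * p := by exact_mod_cast hq'
    exact ⟨q, hq, hlt, by linarith⟩

end Formal
end
end
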